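/- Let μ be a Borel probability measure on SL₂(ℝ) with a finite exponential moment whose support generates a Zariski dense subgroup. There exist constants C > 0 and ε' > 0 such that for all s > 0, a > 0, t > 5s, and all x, x' ∈ X, Σ_{n≥0} μ^{*n}{ g : d(gx, x') ≤ e^{−s} and σ(g,x) − t ∈ [0, a] } ≤ C (1 + a)² e^{−ε' s}. -/

import Mathlib

open MeasureTheory Filter

noncomputable section

abbrev SL2 := Matrix.SpecialLinearGroup (Fin 2) ℝ

abbrev PX := Projectivization ℝ (Fin 2 → ℝ)

instance : TopologicalSpace SL2 := instTopologicalSpaceSubtype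
instance : TopologicalSpace PX := instTopologicalSpaceQuotient
instance : MeasurableSpace SL2 := borel _
instance : MeasurableSpace PX := borel _

/-- Euclidean norm on ℝ². -/
def enorm2 (v : Fin 2 → ℝ) : ℝ := Real.sqrt (v 0 ^ 2 + v 1 ^ 2)

/-- Operator norm of g ∈ SL₂(ℝ) w.r.t. the Euclidean norm on ℝ². -/
def opNorm (g : SL2) : ℝ :=
  ‖Matrix.toEuclideanCLM (𝕜 := ℝ) (n := Fin 2) (g : Matrix (Fin 2) (Fin 2) ℝ)‖

/-- Cartan projection κ(g) = log ‖g‖. -/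
def kappa (g : SL2) : ℝ := Real.log (opNorm g)

/-- The projective action of SL₂(ℝ) on ℙ(ℝ²). -/
def act (g : SL2) (x : PX) : PX :=
  Projectivization.map ((Matrix.SpecialLinearGroup.toLin' g).toLinearMap)
    (LinearEquiv.injective _) x

/-- The norm cocycle σ(g, ℝv) = log (‖gv‖/‖v‖). -/
def cocycle (g : SL2) (x : PX) : ℝ :=
  Real.log (enorm2 ((g : Matrix (Fin 2) (Fin 2) ℝ).mulVec x.rep) / enorm2 x.rep)

/-- The sine distance d(ℝv, ℝw) = |det(v,w)|/(‖v‖‖w‖) on ℙ(ℝ²). -/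
def projDist (x y : PX) : ℝ :=
  |x.rep 0 * y.rep 1 - x.rep 1 * y.rep 0| / (enorm2 x.rep * enorm2 y.rep)

/-- An angle θ(x) ∈ ℝ representing x = ℝ(cos θ, sin θ). -/
def pangle (x : PX) : ℝ := Complex.arg (x.rep 0 + x.rep 1 * Complex.I)

/-- The (topological) support of a measure. -/
def measSupp (μ : Measure SL2) : Set SL2 :=
  {g | ∀ U : Set SL2, IsOpen U → g ∈ U → 0 < μ U}

/-- μ has a finite exponential moment. -/
def HasExpMoment (μ : Measure SL2) : Prop :=
  ∃ ε₁ > (0 : ℝ), ∫⁻ g, ENNReal.ofReal (opNorm g ^ ε₁) ∂μ < ⊤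

/-- The group generated by the support of μ is Zariski dense in SL₂(ℝ),
equivalently it is not solvable. -/
def ZariskiDense (μ : Measure SL2) : Prop :=
  ¬ IsSolvable (Subgroup.closure (measSupp μ))

/-- ν is μ-stationary: μ ∗ ν = ν. -/
def IsStationaryMeas (μ : Measure SL2) (ν : Measure PX) : Prop :=
  μ.bind (fun g => ν.map (act g)) = ν

/-- The product g₁ ⋯ gₙ of a word (g₁, …, gₙ). -/
def word {n : ℕ} (g : Fin n → SL2) : SL2 := (List.ofFn g).prod

/-- The product measure μ^{⊗n} on words of length n. -/
def μpi (μ : Measure SL2) (n : ℕ) : Measure (Fin n → SL2) := Measure.pi fun _ => μ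

open scoped ENNReal NNReal Pointwise Topology

/-!
*Positivity of the exponent.* Let `ν` be a stationary law on the circle and let `Φ h` be the
`ν`-mean of `log ‖h v‖`. Stationarity makes `Φ` harmonic up to the drift, so a nonpositive drift
makes it superharmonic for the right random walk. If no line carries `ν`-mass at least `1/2`, then
`Φ` is proper, hence attains its minimum, and it is constant on `h₀ · supp μ` for a minimiser `h₀`;
its strict convexity away from rotations then conjugates `supp μ` into the rotation group. If some
line does carry half of the mass, the lines of maximal mass are at most two and are permuted by the
group. Either way the group generated by the support is solvable.

*Exponential bounds.* Since every stationary law has positive drift, Hahn–Banach duality yields a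
continuous `φ` for which the cohomologous cocycle `σ + φ ∘ g - φ` has uniformly positive mean. Hence
`σ(g, x) ≤ 1` has exponentially small probability under `μ^{*n}`, uniformly in `x`, and likewise for
the inverse walk; a maximum principle turns this into a renewal bound uniform in `x` and `t`.

*Independence.* If `g` expands `v` and `g⁻¹` expands `w`, then the inequality
`‖g⁻¹ w‖ ≤ ‖g v‖⁻¹ + ‖g‖ |det (g v, w)|` keeps `g v` away from `w`. So the last `m ≍ s` steps alone
bring the walk `e^{-s}`-close to `x'` with probability exponentially small in `s`, while the renewal
bound for the preceding steps controls the sum; times below `m` are large deviations of the norm.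
-/

/-! ### Convolution powers -/

section ConvPow

variable {M : Type*} [Monoid M] [MeasurableSpace M]

/-- The `n`-fold convolution power `μ^{*n}`: the law of a product of `n` independent elements of
law `μ`. -/
def convPow (μ : Measure M) : ℕ → Measure M
  | 0 => Measure.dirac 1
  | n + 1 => (convPow μ n).mconv μ

variable [MeasurableMul₂ M] (μ : Measure M) [IsProbabilityMeasure μ]

instance isProbabilityMeasure_convPow (n : ℕ) : IsProbabilityMeasure (convPow μ n) := by
  induction n with
  | zero => exact Measure.dirac.isProbabilityMeasure
  | succ n ih => exact Measure.probabilitymeasure_of_probabilitymeasures_mconv _ _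

theorem convPow_one : convPow μ 1 = μ := Measure.dirac_one_mconv μ

theorem convPow_add (m n : ℕ) : convPow μ (m + n) = (convPow μ m).mconv (convPow μ n) := by
  induction n with
  | zero => exact (Measure.mconv_dirac_one _).symm
  | succ n ih =>
    change (convPow μ (m + n)).mconv μ = (convPow μ m).mconv ((convPow μ n).mconv μ)
    rw [ih, Measure.mconv_assoc]

theorem lintegral_convPow_add (m n : ℕ) {f : M → ℝ≥0∞} (hf : Measurable f) :
    ∫⁻ g, f g ∂convPow μ (m + n) = ∫⁻ h, ∫⁻ g, f (g * h) ∂convPow μ m ∂convPow μ n := by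
  rw [convPow_add, Measure.lintegral_mconv_eq_lintegral_prod hf,
    lintegral_prod_symm' (fun z : M × M => f (z.1 * z.2)) (hf.comp measurable_mul)]

theorem convPow_add_apply (m n : ℕ) {E : Set M} (hE : MeasurableSet E) :
    convPow μ (m + n) E = ∫⁻ h, convPow μ m {g | g * h ∈ E} ∂convPow μ n := by
  rw [← lintegral_indicator_one hE, lintegral_convPow_add μ m n (measurable_one.indicator hE)]
  refine lintegral_congr fun h => ?_
  exact lintegral_indicator_one (measurable_mul_const h hE)

theorem lintegral_convPow_le_pow {V : Type*} [MulAction M V] {F : M → V → ℝ≥0∞}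
    (hF : ∀ v, Measurable fun g => F g v) (hone : ∀ v, F 1 v ≤ 1)
    (hmul : ∀ g h v, F (g * h) v ≤ F g (h • v) * F h v) {q : ℝ≥0∞}
    (hq : ∀ v, ∫⁻ g, F g v ∂μ ≤ q) (n : ℕ) (v : V) : ∫⁻ g, F g v ∂convPow μ n ≤ q ^ n := by
  induction n generalizing v with
  | zero => simpa [convPow, lintegral_dirac' _ (hF v)] using hone v
  | succ n ih =>
    calc ∫⁻ g, F g v ∂convPow μ (n + 1)
        = ∫⁻ h, ∫⁻ g, F (g * h) v ∂convPow μ n ∂μ := by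
          rw [lintegral_convPow_add μ n 1 (hF v), convPow_one]
      _ ≤ ∫⁻ h, q ^ n * F h v ∂μ := by
          refine lintegral_mono fun h => ?_
          calc ∫⁻ g, F (g * h) v ∂convPow μ n
              ≤ ∫⁻ g, F g (h • v) * F h v ∂convPow μ n := lintegral_mono fun g => hmul g h v
            _ = (∫⁻ g, F g (h • v) ∂convPow μ n) * F h v := lintegral_mul_const _ (hF _)
            _ ≤ q ^ n * F h v := mul_le_mul_left (ih _) _
      _ ≤ q ^ (n + 1) := by
          rw [lintegral_const_mul _ (hF v), pow_succ]
          exact mul_le_mul_right (hq v) _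

end ConvPow

theorem convPow_map_inv {G : Type*} [Group G] [MeasurableSpace G] [MeasurableMul₂ G]
    [MeasurableInv G] (μ : Measure G) [IsProbabilityMeasure μ] (n : ℕ) :
    convPow (μ.map (·⁻¹)) n = (convPow μ n).map (·⁻¹) := by
  have hinv : Measurable fun g : G => g⁻¹ := measurable_inv
  induction n with
  | zero => simp [convPow, Measure.map_dirac' hinv]
  | succ n ih =>
    have := Measure.isProbabilityMeasure_map (μ := μ) hinv.aemeasurable
    refine Measure.ext fun E hE => ?_
    rw [convPow_add_apply _ n 1 hE, convPow_one, Measure.map_apply hinv hE, ih, add_comm,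
      convPow_add, convPow_one, Measure.mconv, Measure.map_apply measurable_mul (hinv hE),
      Measure.prod_apply (measurable_mul (hinv hE)), lintegral_map _ hinv]
    · refine lintegral_congr fun h => ?_
      refine (Measure.map_apply hinv (measurable_mul_const h⁻¹ hE)).trans ?_
      simp [Set.preimage]
    · exact measurable_measure_prodMk_left (measurable_mul.comp measurable_swap hE)

/-! ### The action of `SL₂(ℝ)` on the unit circle -/

instance : IsTopologicalGroup SL2 := Matrix.SpecialLinearGroup.topologicalGroup

instance : BorelSpace SL2 := ⟨rfl⟩

instance : SecondCountableTopology SL2 :=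
  have : SecondCountableTopology (Matrix (Fin 2) (Fin 2) ℝ) :=
    inferInstanceAs (SecondCountableTopology (Fin 2 → Fin 2 → ℝ))
  TopologicalSpace.Subtype.secondCountableTopology _

/-- The Euclidean plane. -/
abbrev Plane := EuclideanSpace ℝ (Fin 2)

/-- The unit circle of the Euclidean plane, used as a compact double cover of the projective
line. -/
abbrev UnitCircle := Metric.sphere (0 : Plane) 1

/-- The linear action of `SL₂(ℝ)` on the Euclidean plane; `opNorm` is its operator norm. -/
def lin (g : SL2) : Plane →L[ℝ] Plane :=
  Matrix.toEuclideanCLM (𝕜 := ℝ) (n := Fin 2) (g : Matrix (Fin 2) (Fin 2) ℝ)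

/-- The determinant of two vectors of the plane. -/
def det2 (v w : Plane) : ℝ := v 0 * w 1 - v 1 * w 0

/-- The rotation of the plane by a quarter turn. -/
def quarterTurn (v : Plane) : Plane := !₂[-v 1, v 0]

section Plane

variable (g h : SL2) (u v w : Plane)

theorem lin_apply_zero : lin g v 0 = g 0 0 * v 0 + g 0 1 * v 1 := by
  simp [lin, Matrix.ofLp_toEuclideanCLM, Matrix.mulVec, dotProduct, Fin.sum_univ_two]

theorem lin_apply_one : lin g v 1 = g 1 0 * v 0 + g 1 1 * v 1 := by
  simp [lin, Matrix.ofLp_toEuclideanCLM, Matrix.mulVec, dotProduct, Fin.sum_univ_two]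

theorem lin_mul_apply : lin (g * h) v = lin g (lin h v) := by simp [lin]

theorem lin_one_apply : lin 1 v = v := by simp [lin]

theorem lin_inv_apply_lin : lin g⁻¹ (lin g v) = v := by
  rw [← lin_mul_apply, inv_mul_cancel, lin_one_apply]

theorem continuous_lin : Continuous lin :=
  (LinearMapClass.linearMap (Matrix.toEuclideanCLM (𝕜 := ℝ)
    (n := Fin 2))).continuous_of_finiteDimensional.comp continuous_subtype_val

theorem norm_sq_eq_add_sq : ‖v‖ ^ 2 = v 0 ^ 2 + v 1 ^ 2 := by
  simp [EuclideanSpace.norm_sq_eq]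

theorem det2_lin : det2 (lin g v) (lin g w) = det2 v w := by
  have hdet := g.det_coe
  rw [Matrix.det_fin_two] at hdet
  simp only [det2, lin_apply_zero, lin_apply_one]
  linear_combination (v 0 * w 1 - v 1 * w 0) * hdet

theorem det2_smul_left (c : ℝ) : det2 (c • v) w = c * det2 v w := by
  simp only [det2, PiLp.smul_apply, smul_eq_mul]; ring

theorem det2_smul_right (c : ℝ) : det2 v (c • w) = c * det2 v w := by
  simp only [det2, PiLp.smul_apply, smul_eq_mul]; ring

theorem det2_smul_eq_add : det2 v w • u = det2 u w • v + det2 v u • w := by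
  ext i
  fin_cases i <;> simp [det2] <;> ring

theorem abs_det2_le : |det2 v w| ≤ ‖v‖ * ‖w‖ := by
  refine abs_le_of_sq_le_sq ?_ (by positivity)
  rw [mul_pow, norm_sq_eq_add_sq, norm_sq_eq_add_sq, det2]
  nlinarith [sq_nonneg (v 0 * w 0 + v 1 * w 1)]

theorem abs_det2_comm : |det2 v w| = |det2 w v| := by
  rw [← abs_neg]; congr 1; simp only [det2]; ring

theorem det2_quarterTurn_self : det2 v (quarterTurn v) = ‖v‖ ^ 2 := by
  simp [det2, quarterTurn, norm_sq_eq_add_sq]; ring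

theorem norm_quarterTurn : ‖quarterTurn v‖ = ‖v‖ := by
  rw [← sq_eq_sq₀ (norm_nonneg _) (norm_nonneg _), norm_sq_eq_add_sq, norm_sq_eq_add_sq]
  simp [quarterTurn]; ring

theorem norm_lin_apply_le : ‖lin g v‖ ≤ opNorm g * ‖v‖ := (lin g).le_opNorm v

/- `‖g⁻¹v‖² = det (g⁻¹v, J g⁻¹v) = det (v, g J g⁻¹v)` for the quarter turn `J`. -/
theorem norm_lin_inv_apply_le : ‖lin g⁻¹ v‖ ≤ opNorm g * ‖v‖ := by
  set u := lin g⁻¹ v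
  have hgu : lin g u = v := by simpa using lin_inv_apply_lin g⁻¹ v
  have hsq : ‖u‖ * ‖u‖ ≤ opNorm g * ‖v‖ * ‖u‖ :=
    calc ‖u‖ * ‖u‖ = det2 v (lin g (quarterTurn u)) := by
          rw [← hgu, det2_lin, det2_quarterTurn_self, sq]
      _ ≤ ‖v‖ * ‖lin g (quarterTurn u)‖ := (le_abs_self _).trans (abs_det2_le _ _)
      _ ≤ ‖v‖ * (opNorm g * ‖u‖) := by
          gcongr; simpa [norm_quarterTurn] using norm_lin_apply_le g (quarterTurn u)
      _ = opNorm g * ‖v‖ * ‖u‖ := by ring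
  rcases (norm_nonneg u).eq_or_lt with h0 | hpos
  · rw [← h0]; exact mul_nonneg (norm_nonneg (lin g)) (norm_nonneg v)
  · exact le_of_mul_le_mul_right hsq hpos

theorem opNorm_inv : opNorm g⁻¹ = opNorm g := by
  have hle : ∀ g : SL2, opNorm g⁻¹ ≤ opNorm g := fun g =>
    (lin g⁻¹).opNorm_le_bound (norm_nonneg (lin g)) (norm_lin_inv_apply_le g)
  exact (hle g).antisymm (by simpa using hle g⁻¹)

end Plane

/-- The factor `‖gv‖` by which `g` stretches the unit vector `v`. -/
def stretch (g : SL2) (v : UnitCircle) : ℝ := ‖lin g v‖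

/-- The norm cocycle `σ(g, v) = log ‖gv‖`, on the unit circle. -/
def logStretch (g : SL2) (v : UnitCircle) : ℝ := Real.log (stretch g v)

section Circle

variable (g h : SL2) (u v w : UnitCircle)

theorem stretch_pos : 0 < stretch g v := by
  refine norm_pos_iff.2 fun h => ne_zero_of_mem_unit_sphere v ?_
  rw [← lin_inv_apply_lin g v, h, map_zero]

instance : SMul SL2 UnitCircle where
  smul g v := ⟨(stretch g v)⁻¹ • lin g v, by
    have := stretch_pos g v
    rw [mem_sphere_zero_iff_norm, norm_smul, norm_inv, Real.norm_of_nonneg this.le]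
    exact inv_mul_cancel₀ this.ne'⟩

theorem coe_smul : ((g • v : UnitCircle) : Plane) = (stretch g v)⁻¹ • lin g v := rfl

theorem lin_coe : lin g v = stretch g v • ((g • v : UnitCircle) : Plane) := by
  rw [coe_smul, smul_inv_smul₀ (stretch_pos g v).ne']

theorem stretch_mul : stretch (g * h) v = stretch g (h • v) * stretch h v := by
  rw [stretch, lin_mul_apply, lin_coe h v, map_smul, norm_smul,
    Real.norm_of_nonneg (stretch_pos h v).le, mul_comm]
  rfl

theorem stretch_one : stretch 1 v = 1 := by
  rw [stretch, lin_one_apply, norm_eq_of_mem_sphere]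

instance : MulAction SL2 UnitCircle where
  one_smul v := Subtype.ext <| by rw [coe_smul, stretch_one, lin_one_apply, inv_one, one_smul]
  mul_smul g h v := Subtype.ext <| by
    rw [coe_smul, coe_smul, stretch_mul, lin_mul_apply, lin_coe h v, map_smul, smul_smul,
      mul_inv, mul_assoc, inv_mul_cancel₀ (stretch_pos h v).ne', mul_one]

theorem stretch_inv_smul : stretch g⁻¹ (g • v) = (stretch g v)⁻¹ := by
  refine eq_inv_of_mul_eq_one_left ?_
  rw [← stretch_mul, inv_mul_cancel, stretch_one]

theorem stretch_le_opNorm : stretch g v ≤ opNorm g := by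
  simpa [stretch] using norm_lin_apply_le g v

theorem inv_opNorm_le_stretch : (opNorm g)⁻¹ ≤ stretch g v := by
  refine inv_le_of_inv_le₀ (stretch_pos g v) ?_
  rw [← stretch_inv_smul, ← opNorm_inv]
  exact stretch_le_opNorm _ _

theorem det2_smul_smul :
    det2 (g • v : UnitCircle) (g • w : UnitCircle) =
      (stretch g v)⁻¹ * ((stretch g w)⁻¹ * det2 v w) := by
  rw [coe_smul, coe_smul, det2_smul_left, det2_smul_right, det2_lin]

theorem abs_det2_le_add : |det2 v w| ≤ |det2 v u| + |det2 u w| := by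
  have h := congrArg norm (det2_smul_eq_add (u : Plane) v w)
  rw [norm_smul, norm_eq_of_mem_sphere, mul_one, Real.norm_eq_abs] at h
  rw [h, add_comm |det2 _ _|]
  refine (norm_add_le _ _).trans_eq ?_
  simp [norm_smul]

theorem abs_det2_mul_opNorm_le : |det2 v w| * opNorm g ≤ stretch g v + stretch g w := by
  have hnorm : |det2 v w| * opNorm g = ‖det2 v w • lin g‖ := by
    rw [norm_smul, Real.norm_eq_abs]; rfl
  rw [hnorm]
  refine ContinuousLinearMap.opNorm_le_bound _
    (add_pos (stretch_pos g v) (stretch_pos g w)).le fun u => ?_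
  have hv := abs_det2_le u w
  have hw := abs_det2_le v u
  rw [norm_eq_of_mem_sphere] at hv hw
  calc ‖(det2 v w • lin g) u‖ = ‖det2 u w • lin g v + det2 v u • lin g w‖ := by
        rw [smul_apply, ← map_smul, det2_smul_eq_add, map_add, map_smul,
          map_smul]
    _ ≤ |det2 u w| * stretch g v + |det2 v u| * stretch g w :=
        (norm_add_le _ _).trans_eq (by simp [norm_smul, stretch])
    _ ≤ (stretch g v + stretch g w) * ‖u‖ := by
        nlinarith [stretch_pos g v, stretch_pos g w]

/- Decompose `w` along `u = g • v`, which `g⁻¹` contracts by `stretch g v`, and along the quarter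
turn of `u`. -/
theorem stretch_inv_le :
    stretch g⁻¹ w ≤ (stretch g v)⁻¹ + opNorm g * |det2 (g • v : UnitCircle) w| := by
  set u := g • v
  have hdecomp : (w : Plane) =
      det2 w (quarterTurn u) • (u : Plane) + det2 u w • quarterTurn u := by
    simpa [det2_quarterTurn_self, norm_eq_of_mem_sphere] using
      det2_smul_eq_add (w : Plane) u (quarterTurn u)
  have hfirst : |det2 w (quarterTurn u)| ≤ 1 := by
    simpa [norm_quarterTurn, norm_eq_of_mem_sphere] using abs_det2_le w (quarterTurn u)
  have hsecond : ‖lin g⁻¹ (quarterTurn u)‖ ≤ opNorm g := by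
    simpa [norm_quarterTurn, norm_eq_of_mem_sphere] using norm_lin_inv_apply_le g (quarterTurn u)
  calc stretch g⁻¹ w
      = ‖det2 w (quarterTurn u) • lin g⁻¹ u + det2 u w • lin g⁻¹ (quarterTurn u)‖ := by
        rw [stretch, hdecomp, map_add, map_smul, map_smul, ← hdecomp]
    _ ≤ |det2 w (quarterTurn u)| * (stretch g v)⁻¹
          + |det2 u w| * ‖lin g⁻¹ (quarterTurn u)‖ := by
        refine (norm_add_le _ _).trans_eq ?_
        rw [norm_smul, norm_smul, ← stretch_inv_smul]; rfl
    _ ≤ 1 * (stretch g v)⁻¹ + |det2 u w| * opNorm g := by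
        have := stretch_pos g v
        gcongr
    _ = (stretch g v)⁻¹ + opNorm g * |det2 u w| := by ring

@[fun_prop]
theorem continuous_stretch {X : Type*} [TopologicalSpace X] {f : X → SL2} {v : X → UnitCircle}
    (hf : Continuous f) (hv : Continuous v) : Continuous fun x => stretch (f x) (v x) :=
  ((continuous_lin.comp hf).clm_apply (continuous_subtype_val.comp hv)).norm

instance : ContinuousSMul SL2 UnitCircle where
  continuous_smul := by
    have hinv : Continuous fun p : SL2 × UnitCircle => (stretch p.1 p.2)⁻¹ :=
      (continuous_stretch continuous_fst continuous_snd).inv₀ fun p => (stretch_pos p.1 p.2).ne'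
    exact (hinv.smul ((continuous_lin.comp continuous_fst).clm_apply
      (continuous_subtype_val.comp continuous_snd))).subtype_mk _

@[fun_prop]
theorem continuous_det2 {X : Type*} [TopologicalSpace X] {v w : X → Plane} (hv : Continuous v)
    (hw : Continuous w) : Continuous fun x => det2 (v x) (w x) := by
  unfold det2; fun_prop

/-! ### The norm cocycle -/

theorem one_le_opNorm : 1 ≤ opNorm g := by
  obtain ⟨v⟩ : Nonempty UnitCircle := (NormedSpace.sphere_nonempty.2 zero_le_one).to_subtype
  have hpos := (stretch_pos g v).trans_le (stretch_le_opNorm g v)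
  have := (inv_opNorm_le_stretch g v).trans (stretch_le_opNorm g v)
  rw [inv_le_iff_one_le_mul₀ hpos] at this
  nlinarith

theorem opNorm_pos : 0 < opNorm g := one_pos.trans_le (one_le_opNorm g)

theorem kappa_nonneg : 0 ≤ kappa g := Real.log_nonneg (one_le_opNorm g)

theorem exp_kappa : Real.exp (kappa g) = opNorm g := Real.exp_log (opNorm_pos g)

theorem exp_logStretch : Real.exp (logStretch g v) = stretch g v :=
  Real.exp_log (stretch_pos g v)

theorem kappa_inv : kappa g⁻¹ = kappa g := by rw [kappa, opNorm_inv, kappa]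

theorem kappa_one : kappa 1 = 0 := by simp [kappa, opNorm]

theorem kappa_mul_le : kappa (g * h) ≤ kappa g + kappa h := by
  rw [kappa, kappa, kappa, ← Real.log_mul (opNorm_pos g).ne' (opNorm_pos h).ne']
  refine Real.log_le_log (opNorm_pos _) ?_
  simpa [opNorm] using norm_mul_le (Matrix.toEuclideanCLM (𝕜 := ℝ) (n := Fin 2) g.1)
    (Matrix.toEuclideanCLM (𝕜 := ℝ) (n := Fin 2) h.1)

@[fun_prop]
theorem continuous_kappa : Continuous kappa :=
  continuous_lin.norm.log fun g => (opNorm_pos g).ne'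

theorem abs_logStretch_le_kappa : |logStretch g v| ≤ kappa g := by
  refine abs_le.2 ⟨?_, Real.log_le_log (stretch_pos g v) (stretch_le_opNorm g v)⟩
  rw [kappa, ← Real.log_inv]
  exact Real.log_le_log (inv_pos.2 (opNorm_pos g)) (inv_opNorm_le_stretch g v)

theorem logStretch_one : logStretch 1 v = 0 := by rw [logStretch, stretch_one, Real.log_one]

theorem logStretch_mul : logStretch (g * h) v = logStretch g (h • v) + logStretch h v := by
  rw [logStretch, stretch_mul, Real.log_mul (stretch_pos _ _).ne' (stretch_pos _ _).ne']
  rfl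

@[fun_prop]
theorem continuous_logStretch {X : Type*} [TopologicalSpace X] {f : X → SL2} {v : X → UnitCircle}
    (hf : Continuous f) (hv : Continuous v) : Continuous fun x => logStretch (f x) (v x) :=
  (continuous_stretch hf hv).log fun x => (stretch_pos (f x) (v x)).ne'

end Circle

/-! ### Solvable subgroups of `SL₂(ℝ)` -/

theorem isSolvable_of_commutator_le {G : Type*} [Group G] {H K : Subgroup G} (h : ⁅H, H⁆ ≤ K)
    [Group.IsSolvable K] : Group.IsSolvable H := by
  have hmap : (commutator H).map H.subtype ≤ K := by
    rw [commutator_def, Subgroup.map_commutator, ← MonoidHom.range_eq_map, Subgroup.range_subtype]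
    exact h
  have : Group.IsSolvable (commutator H) := Group.isSolvable_of_isSolvable_injective
    (f := (Subgroup.inclusion hmap).comp
      ((commutator H).equivMapOfInjective _ H.subtype_injective).toMonoidHom)
    ((Subgroup.inclusion_injective hmap).comp (MulEquiv.injective _))
  have : Group.IsSolvable (Abelianization H) := Group.isSolvable_of_comm mul_comm
  refine Group.isSolvable_of_ker_le_range (commutator H).subtype Abelianization.of ?_
  rw [Abelianization.ker_of, Subgroup.range_subtype]

theorem isSolvable_of_le {G : Type*} [Group G] {H K : Subgroup G} (h : H ≤ K)
    [Group.IsSolvable K] : Group.IsSolvable H :=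
  Group.isSolvable_of_isSolvable_injective (Subgroup.inclusion_injective h)

theorem commutator_le_stabilizer {G α : Type*} [Group G] [MulAction G α] {H : Subgroup G} {a : α}
    (h : ∀ g₁ ∈ H, ∀ g₂ ∈ H, (g₁ * g₂) • a = (g₂ * g₁) • a) :
    ⁅H, H⁆ ≤ MulAction.stabilizer G a := by
  refine Subgroup.commutator_le.2 fun g₁ h₁ g₂ h₂ => ?_
  have := h g₁⁻¹ (H.inv_mem h₁) g₂⁻¹ (H.inv_mem h₂)
  rw [MulAction.mem_stabilizer_iff, commutatorElement_def, mul_assoc, mul_smul, this, ← mul_smul]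
  simp

/- Elements of the stabilizer of a pair either fix both points or swap them, so they commute on
the pair. -/
theorem commutator_stabilizer_pair_le {G α : Type*} [Group G] [MulAction G α] (a b : α) :
    ⁅MulAction.stabilizer G ({a, b} : Set α), MulAction.stabilizer G ({a, b} : Set α)⁆ ≤
      MulAction.stabilizer G a := by
  refine commutator_le_stabilizer fun g₁ h₁ g₂ h₂ => ?_
  rcases eq_or_ne a b with rfl | hab
  · simp_all [MulAction.mem_stabilizer_iff, mul_smul]
  have hcases : ∀ g ∈ MulAction.stabilizer G ({a, b} : Set α),
      (g • a = a ∧ g • b = b) ∨ (g • a = b ∧ g • b = a) := fun g hg => by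
    have hne : g • a ≠ g • b := fun h => hab (smul_left_cancel g h)
    rw [MulAction.mem_stabilizer_set' (Set.toFinite _)] at hg
    have ha := hg (Set.mem_insert a _)
    have hb := hg (Set.mem_insert_of_mem a rfl)
    simp only [Set.mem_insert_iff, Set.mem_singleton_iff] at ha hb
    grind
  rw [mul_smul, mul_smul]
  rcases hcases g₁ h₁ with h | h <;> rcases hcases g₂ h₂ with h' | h' <;> simp only [h, h']

instance : FaithfulSMul SL2 Plane where
  eq_of_smul_eq_smul h := Subtype.ext <|
    (Matrix.toEuclideanCLM (𝕜 := ℝ) (n := Fin 2)).injective <| ContinuousLinearMap.ext h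

theorem exists_smul_eq_of_det2_eq_zero {v w : Plane} (hw : w ≠ 0) (h : det2 v w = 0) :
    ∃ c : ℝ, v = c • w := by
  have hdec := det2_smul_eq_add v w (quarterTurn w)
  rw [abs_eq_zero.1 ((abs_det2_comm w v).trans (abs_eq_zero.2 h)), zero_smul, add_zero,
    det2_quarterTurn_self] at hdec
  refine ⟨(‖w‖ ^ 2)⁻¹ * det2 v (quarterTurn w), ?_⟩
  rw [mul_smul, ← hdec, inv_smul_smul₀ (by positivity)]

/- In a basis starting with `w`, the elements fixing `w` are unipotent upper triangular. -/
theorem isSolvable_stabilizer_vector {w : Plane} (hw : w ≠ 0) :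
    Group.IsSolvable (MulAction.stabilizer SL2 w) := by
  have hshift : ∀ g : MulAction.stabilizer SL2 w, ∀ v : Plane, ∃ c : ℝ, g • v = v + c • w := by
    intro g v
    have hg : lin g w = w := g.2
    have h0 : det2 (lin g v - v) w = 0 := by
      have := det2_lin g v w
      rw [hg] at this
      simp only [det2, PiLp.sub_apply] at this ⊢
      linarith
    obtain ⟨c, hc⟩ := exists_smul_eq_of_det2_eq_zero hw h0
    exact ⟨c, by rw [← hc, add_sub_cancel]; rfl⟩
  refine Group.isSolvable_of_comm fun g h => eq_of_smul_eq_smul fun v : Plane => ?_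
  obtain ⟨c, hc⟩ := hshift g v
  obtain ⟨d, hd⟩ := hshift h v
  have hfix : ∀ g : MulAction.stabilizer SL2 w, ∀ c : ℝ, g • (c • w) = c • w := fun g c => by
    rw [smul_comm]; exact congrArg _ g.2
  rw [mul_smul, mul_smul, hc, hd, smul_add, smul_add, hc, hd, hfix, hfix]
  abel

theorem isSolvable_stabilizer_point (ℓ : Projectivization ℝ Plane) :
    Group.IsSolvable (MulAction.stabilizer SL2 ℓ) := by
  induction ℓ with | h w hw =>
  have hscale : ∀ g ∈ MulAction.stabilizer SL2 (Projectivization.mk ℝ w hw),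
      ∃ c : ℝ, g • w = c • w := fun g hg => by
    rw [MulAction.mem_stabilizer_iff, Projectivization.smul_mk,
      Projectivization.mk_eq_mk_iff'] at hg
    exact hg.imp fun _ => Eq.symm
  have := isSolvable_stabilizer_vector hw
  refine isSolvable_of_commutator_le (commutator_le_stabilizer (a := w) fun g hg h hh => ?_)
  obtain ⟨c, hc⟩ := hscale g hg
  obtain ⟨d, hd⟩ := hscale h hh
  rw [mul_smul, mul_smul, hc, hd, smul_comm g, hc, smul_comm h, hd, smul_comm c]

theorem isSolvable_stabilizer_pair (ℓ ℓ' : Projectivization ℝ Plane) :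
    Group.IsSolvable (MulAction.stabilizer SL2 ({ℓ, ℓ'} : Set (Projectivization ℝ Plane))) :=
  have := isSolvable_stabilizer_point ℓ
  isSolvable_of_commutator_le (commutator_stabilizer_pair_le ℓ ℓ')

/-- The matrix of `k` is a rotation matrix. -/
def IsRotation (k : SL2) : Prop := k 0 0 = k 1 1 ∧ k 0 1 = -k 1 0

theorem IsRotation.mul_comm {k l : SL2} (hk : IsRotation k) (hl : IsRotation l) :
    k * l = l * k := by
  obtain ⟨hk₁, hk₂⟩ := hk
  obtain ⟨hl₁, hl₂⟩ := hl
  ext i j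
  fin_cases i <;> fin_cases j <;>
    simp [Matrix.mul_apply, Fin.sum_univ_two, hk₁, hk₂, hl₁, hl₂] <;> ring

theorem isSolvable_closure_of_isRotation_conj {S : Set SL2} {h : SL2}
    (hS : ∀ g ∈ S, IsRotation (h * g * h⁻¹)) : Group.IsSolvable (Subgroup.closure S) := by
  have : IsMulCommutative (Subgroup.closure S) := by
    refine Subgroup.isMulCommutative_closure fun g hg k hk => ?_
    have := (hS g hg).mul_comm (hS k hk)
    rwa [conj_mul, conj_mul, mul_left_inj, mul_right_inj] at this
  exact Group.isSolvable_of_comm fun a b => mul_comm' a b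

/-! ### Matrices stretching less on average -/

section SquareRoot

variable (k : SL2)

/-- The inner product of the images under `k` of a vector and of its quarter turn; it vanishes
exactly when the vector is a principal direction of `k`. -/
def skewness (v : Plane) : ℝ := inner ℝ (lin k v) (lin k (quarterTurn v))

theorem skewness_eq (v : Plane) :
    skewness k v = (k 0 0 * k 0 1 + k 1 0 * k 1 1) * (v 0 ^ 2 - v 1 ^ 2) +
      (k 0 1 ^ 2 + k 1 1 ^ 2 - (k 0 0 ^ 2 + k 1 0 ^ 2)) * (v 0 * v 1) := by
  simp only [skewness, PiLp.inner_apply, Fin.sum_univ_two, lin_apply_zero, lin_apply_one,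
    quarterTurn, Matrix.cons_val_zero, Matrix.cons_val_one, RCLike.inner_apply,
    conj_trivial]
  ring

theorem norm_sq_lin (v : Plane) :
    ‖lin k v‖ ^ 2 = (k 0 0 ^ 2 + k 1 0 ^ 2) * v 0 ^ 2 +
      2 * (k 0 0 * k 0 1 + k 1 0 * k 1 1) * (v 0 * v 1) + (k 0 1 ^ 2 + k 1 1 ^ 2) * v 1 ^ 2 := by
  rw [norm_sq_eq_add_sq, lin_apply_zero, lin_apply_one]; ring

theorem isRotation_of_gram_eq (hoff : k 0 0 * k 0 1 + k 1 0 * k 1 1 = 0)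
    (hdiag : k 0 1 ^ 2 + k 1 1 ^ 2 - (k 0 0 ^ 2 + k 1 0 ^ 2) = 0) : IsRotation k := by
  have hdet := k.det_coe
  rw [Matrix.det_fin_two] at hdet
  set A := k 0 0 ^ 2 + k 1 0 ^ 2
  have hA : A = 1 := by
    have hsq : A ^ 2 = 1 := by
      simp only [A]
      linear_combination (k 0 0 * k 1 1 - k 0 1 * k 1 0 + 1) * hdet
        + (k 0 0 * k 0 1 + k 1 0 * k 1 1) * hoff - A * hdiag
    nlinarith [sq_nonneg (k 0 0), sq_nonneg (k 1 0)]
  have hzero : (k 0 0 - k 1 1) ^ 2 + (k 0 1 + k 1 0) ^ 2 = 0 := by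
    linear_combination hdiag - 2 * hdet + 2 * hA
  constructor <;> nlinarith [hzero, sq_nonneg (k 0 0 - k 1 1), sq_nonneg (k 0 1 + k 1 0)]

variable {k}

theorem det2_eq_zero_of_skewness_eq_zero (hk : ¬IsRotation k) {v w : Plane}
    (hv : skewness k v = 0) (hw : skewness k w = 0) :
    det2 v w = 0 ∨ det2 v (quarterTurn w) = 0 := by
  rw [skewness_eq] at hv hw
  set b := k 0 0 * k 0 1 + k 1 0 * k 1 1
  set d := k 0 1 ^ 2 + k 1 1 ^ 2 - (k 0 0 ^ 2 + k 1 0 ^ 2)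
  have hprod : det2 v w * det2 v (quarterTurn w) =
      (v 0 ^ 2 - v 1 ^ 2) * (w 0 * w 1) - (w 0 ^ 2 - w 1 ^ 2) * (v 0 * v 1) := by
    simp [det2, quarterTurn]; ring
  rw [← mul_eq_zero, hprod]
  have hbd : b ≠ 0 ∨ d ≠ 0 := by
    by_contra! h
    exact hk (isRotation_of_gram_eq k h.1 h.2)
  rcases hbd with h | h <;> refine (mul_eq_zero.1 ?_).resolve_left h
  · linear_combination (w 0 * w 1) * hv - (v 0 * v 1) * hw
  · linear_combination (v 0 ^ 2 - v 1 ^ 2) * hw - (w 0 ^ 2 - w 1 ^ 2) * hv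

variable (k)

/- The symmetric matrix `P = (Q + 1) / √(tr Q + 2)` is the positive square root of `Q = kᵀk`, and
`r` is a Cholesky factor of `P`. -/
theorem exists_norm_sq_lin_eq_div : ∃ r : SL2, ∀ v : Plane, ‖v‖ = 1 →
    ‖lin r v‖ ^ 2 =
      (‖lin k v‖ ^ 2 + 1) / √(k 0 0 ^ 2 + k 1 0 ^ 2 + (k 0 1 ^ 2 + k 1 1 ^ 2) + 2) := by
  have hdet := k.det_coe
  rw [Matrix.det_fin_two] at hdet
  have hgram : (k 0 0 ^ 2 + k 1 0 ^ 2) * (k 0 1 ^ 2 + k 1 1 ^ 2) =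
      1 + (k 0 0 * k 0 1 + k 1 0 * k 1 1) ^ 2 := by
    linear_combination (k 0 0 * k 1 1 - k 0 1 * k 1 0 + 1) * hdet
  have hA₀ : 0 ≤ k 0 0 ^ 2 + k 1 0 ^ 2 := by positivity
  have hD₀ : 0 ≤ k 0 1 ^ 2 + k 1 1 ^ 2 := by positivity
  simp only [norm_sq_lin k]
  generalize k 0 0 ^ 2 + k 1 0 ^ 2 = A at *
  generalize k 0 0 * k 0 1 + k 1 0 * k 1 1 = B at *
  generalize k 0 1 ^ 2 + k 1 1 ^ 2 = D at *
  obtain ⟨T, hT, hTsq⟩ : ∃ T : ℝ, 0 < T ∧ T ^ 2 = A + D + 2 :=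
    ⟨_, Real.sqrt_pos.2 (by positivity), Real.sq_sqrt (by positivity)⟩
  obtain ⟨p, hp, hpsq⟩ : ∃ p : ℝ, 0 < p ∧ p ^ 2 = (A + 1) / T :=
    ⟨_, Real.sqrt_pos.2 (by positivity), Real.sq_sqrt (by positivity)⟩
  let r : SL2 := ⟨!![p, B / T / p; 0, p⁻¹], by simp [Matrix.det_fin_two, hp.ne']⟩
  refine ⟨r, fun v hv => ?_⟩
  have hv' : v 0 ^ 2 + v 1 ^ 2 = 1 := by rw [← norm_sq_eq_add_sq, hv, one_pow]
  have hcorner : (B / T / p) ^ 2 + p⁻¹ ^ 2 = (D + 1) / T := by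
    rw [div_pow, inv_pow, hpsq]
    field_simp
    linear_combination hTsq - hgram
  have hoff : p * (B / T / p) = B / T := by field_simp
  rw [norm_sq_lin, ← hTsq, Real.sqrt_sq hT.le]
  change (p ^ 2 + 0 ^ 2) * v 0 ^ 2 + 2 * (p * (B / T / p) + 0 * p⁻¹) * (v 0 * v 1)
    + ((B / T / p) ^ 2 + p⁻¹ ^ 2) * v 1 ^ 2 = _
  rw [hcorner, hoff, hpsq]
  field_simp
  linear_combination p * hv'

theorem trace_mul_norm_sq_sub_sq {v : Plane} (hv : ‖v‖ = 1) :
    (k 0 0 ^ 2 + k 1 0 ^ 2 + (k 0 1 ^ 2 + k 1 1 ^ 2) + 2) * ‖lin k v‖ ^ 2 -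
      (‖lin k v‖ ^ 2 + 1) ^ 2 = skewness k v ^ 2 := by
  have hdet := k.det_coe
  rw [Matrix.det_fin_two] at hdet
  have hv : v 0 ^ 2 + v 1 ^ 2 = 1 := by rw [← norm_sq_eq_add_sq, hv, one_pow]
  rw [skewness_eq, norm_sq_lin]
  linear_combination
    (v 0 ^ 2 + v 1 ^ 2) ^ 2 * (k 0 0 * k 1 1 - k 0 1 * k 1 0 + 1) * hdet
      + (v 0 ^ 2 + v 1 ^ 2 + 1 - (k 0 0 ^ 2 + k 1 0 ^ 2 + (k 0 1 ^ 2 + k 1 1 ^ 2))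
        * ((k 0 0 ^ 2 + k 1 0 ^ 2) * v 0 ^ 2 + 2 * (k 0 0 * k 0 1 + k 1 0 * k 1 1) * (v 0 * v 1)
          + (k 0 1 ^ 2 + k 1 1 ^ 2) * v 1 ^ 2)) * hv

/- The square root `r` of `k` in the symmetric space stretches by at most `√‖kv‖`: this is the
strict convexity of the norm along geodesics. -/
theorem exists_two_mul_logStretch_le : ∃ r : SL2, ∀ v : UnitCircle,
    2 * logStretch r v ≤ logStretch k v ∧
      (2 * logStretch r v = logStretch k v → skewness k v = 0) := by
  obtain ⟨r, hr⟩ := exists_norm_sq_lin_eq_div k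
  refine ⟨r, fun v => ?_⟩
  have hr := hr v (norm_eq_of_mem_sphere v)
  set T := k 0 0 ^ 2 + k 1 0 ^ 2 + (k 0 1 ^ 2 + k 1 1 ^ 2) + 2 with hT
  have hTpos : 0 < T := by positivity
  have hdefect : (stretch r v ^ 2) ^ 2 = stretch k v ^ 2 - skewness k v ^ 2 / T := by
    have hnorm := trace_mul_norm_sq_sub_sq k (norm_eq_of_mem_sphere v)
    rw [← hT] at hnorm
    rw [stretch, stretch, hr, div_pow, Real.sq_sqrt hTpos.le]
    field_simp
    linear_combination -hnorm
  have hlog : 2 * (2 * logStretch r v) = Real.log ((stretch r v ^ 2) ^ 2) := by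
    rw [Real.log_pow, Real.log_pow]; rfl
  have hlog' : 2 * logStretch k v = Real.log (stretch k v ^ 2) := by rw [Real.log_pow]; rfl
  have hpos : 0 < (stretch r v ^ 2) ^ 2 := by have := stretch_pos r v; positivity
  have hpos' : 0 < stretch k v ^ 2 := by have := stretch_pos k v; positivity
  have hle : (stretch r v ^ 2) ^ 2 ≤ stretch k v ^ 2 := by
    rw [hdefect]; exact sub_le_self _ (by positivity)
  refine ⟨by linarith [Real.log_le_log hpos hle], fun h => ?_⟩
  have heq := Real.log_injOn_pos hpos hpos' (by linarith)
  have : skewness k v ^ 2 / T = 0 := by linarith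
  simpa [hTpos.ne'] using this

end SquareRoot

/-! ### Stationary measures and the drift -/

theorem measSupp_subset_of_ae_mem {μ : Measure SL2} {C : Set SL2} (hC : IsClosed C)
    (h : ∀ᵐ g ∂μ, g ∈ C) : measSupp μ ⊆ C := fun g hg => by
  by_contra hgC
  exact (hg Cᶜ hC.isOpen_compl hgC).ne' h

/-- `ν` is `μ`-stationary: if `g` has law `μ` and `v` is independent of law `ν`, then `g • v` has
law `ν`. -/
def IsStationaryLaw {G V : Type*} [MeasurableSpace G] [MeasurableSpace V] [SMul G V] (μ : Measure G)
    (ν : Measure V) : Prop :=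
  (μ.prod ν).map (fun p => p.1 • p.2) = ν

namespace IsStationaryLaw

variable {G V : Type*} [MeasurableSpace G] [MeasurableSpace V] [SMul G V] [MeasurableSMul₂ G V]
  {μ : Measure G} {ν : Measure V} [SFinite ν]

theorem measure_eq_lintegral (h : IsStationaryLaw μ ν) {E : Set V} (hE : MeasurableSet E) :
    ν E = ∫⁻ g, ν ((g • ·) ⁻¹' E) ∂μ := by
  have hsmul : Measurable fun p : G × V => p.1 • p.2 := measurable_smul
  conv_lhs => rw [← h]
  rw [Measure.map_apply hsmul hE, Measure.prod_apply (hsmul hE)]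
  rfl

theorem integral_integral_smul [SFinite μ] (h : IsStationaryLaw μ ν) {f : V → ℝ}
    (hf : Integrable f ν) :
    ∫ g, ∫ v, f (g • v) ∂ν ∂μ = ∫ v, f v ∂ν := by
  have hmap : Integrable f ((μ.prod ν).map fun p => p.1 • p.2) := by rwa [h]
  have hsmul : Measurable fun p : G × V => p.1 • p.2 := measurable_smul
  rw [← integral_prod (fun p : G × V => f (p.1 • p.2)) (hmap.comp_measurable hsmul),
    ← integral_map hsmul.aemeasurable hmap.aestronglyMeasurable, h]

end IsStationaryLaw

theorem isClosedEmbedding_lin : Topology.IsClosedEmbedding lin := by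
  let e : Matrix (Fin 2) (Fin 2) ℝ ≃ₗ[ℝ] (Plane →L[ℝ] Plane) :=
    (Matrix.toEuclideanCLM (𝕜 := ℝ) (n := Fin 2)).toAlgEquiv.toLinearEquiv
  refine e.toContinuousLinearEquiv.toHomeomorph.isClosedEmbedding.comp ?_
  have hclosed : IsClosed {A : Matrix (Fin 2) (Fin 2) ℝ | A.det = 1} :=
    isClosed_eq continuous_id.matrix_det continuous_const
  exact hclosed.isClosedEmbedding_subtypeVal

instance : LocallyCompactSpace SL2 := isClosedEmbedding_lin.locallyCompactSpace

theorem tendsto_kappa_cocompact_atTop : Tendsto kappa (cocompact SL2) atTop :=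
  Real.tendsto_log_atTop.comp <|
    tendsto_norm_cocompact_atTop.comp isClosedEmbedding_lin.tendsto_cocompact

/-- The mean `Φ(h) = ∫ σ(h, v) dν(v)` of the norm cocycle over the starting point. -/
def meanLogStretch (ν : Measure UnitCircle) (h : SL2) : ℝ := ∫ v, logStretch h v ∂ν

section Mean

variable (ν : Measure UnitCircle) [IsProbabilityMeasure ν]

theorem integrable_logStretch (h : SL2) : Integrable (logStretch h) ν :=
  .of_bound (continuous_logStretch continuous_const continuous_id).aestronglyMeasurable (kappa h)
    (.of_forall fun v => abs_logStretch_le_kappa h v)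

theorem integrable_logStretch_smul (h g : SL2) : Integrable (fun v => logStretch h (g • v)) ν :=
  .of_bound (continuous_logStretch continuous_const
    (continuous_const_smul g)).aestronglyMeasurable (kappa h)
    (.of_forall fun _ => abs_logStretch_le_kappa h _)

theorem meanLogStretch_mul (h g : SL2) :
    meanLogStretch ν (h * g) = ∫ v, logStretch h (g • v) ∂ν + meanLogStretch ν g := by
  simp only [meanLogStretch, logStretch_mul]
  exact integral_add (integrable_logStretch_smul ν h g) (integrable_logStretch ν g)

theorem continuous_meanLogStretch : Continuous (meanLogStretch ν) := by
  change Continuous fun h => ∫ v, logStretch h v ∂ν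
  simpa using continuous_parametric_integral_of_continuous (μ := ν)
    (continuous_logStretch continuous_fst continuous_snd) isCompact_univ

theorem abs_meanLogStretch_le_kappa (h : SL2) : |meanLogStretch ν h| ≤ kappa h := by
  simpa [meanLogStretch] using norm_integral_le_of_norm_le_const (μ := ν) (f := logStretch h)
    (.of_forall fun v => abs_logStretch_le_kappa h v)

variable {μ : Measure SL2} [IsProbabilityMeasure μ] {ν}

theorem integrable_meanLogStretch_mul (hκ : Integrable kappa μ) (h : SL2) :
    Integrable (fun g => meanLogStretch ν (h * g)) μ := by
  refine ((integrable_const (kappa h)).add hκ).mono'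
    ((continuous_meanLogStretch ν).comp (continuous_const_mul h)).aestronglyMeasurable
    (.of_forall fun g => (abs_meanLogStretch_le_kappa ν _).trans (kappa_mul_le h g))

theorem integral_meanLogStretch_mul (hν : IsStationaryLaw μ ν) (hκ : Integrable kappa μ) (h : SL2) :
    ∫ g, meanLogStretch ν (h * g) ∂μ = meanLogStretch ν h + ∫ g, meanLogStretch ν g ∂μ := by
  have hΦ : Integrable (meanLogStretch ν) μ := by
    simpa using integrable_meanLogStretch_mul (ν := ν) hκ 1
  have hdiff : Integrable (fun g => ∫ v, logStretch h (g • v) ∂ν) μ := by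
    refine ((integrable_meanLogStretch_mul (ν := ν) hκ h).sub hΦ).congr (.of_forall fun g => ?_)
    simp [meanLogStretch_mul]
  simp only [meanLogStretch_mul]
  rw [integral_add hdiff hΦ, hν.integral_integral_smul (integrable_logStretch ν h)]
  rfl

/- The drift hypothesis makes `Φ` superharmonic for the right random walk, hence constant along it
at a minimum. -/
theorem measSupp_subset_of_forall_meanLogStretch_le (hν : IsStationaryLaw μ ν)
    (hκ : Integrable kappa μ) (hdrift : ∫ g, meanLogStretch ν g ∂μ ≤ 0) {h : SL2}
    (hmin : ∀ g, meanLogStretch ν h ≤ meanLogStretch ν g) :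
    measSupp μ ⊆ {g | meanLogStretch ν (h * g) = meanLogStretch ν h} := by
  have hcont : Continuous fun g => meanLogStretch ν (h * g) :=
    (continuous_meanLogStretch ν).comp (continuous_const_mul h)
  refine measSupp_subset_of_ae_mem (isClosed_eq hcont continuous_const) ?_
  have hint := (integrable_meanLogStretch_mul (ν := ν) hκ h).sub
    (integrable_const (meanLogStretch ν h))
  have hle : ∫ g, (meanLogStretch ν (h * g) - meanLogStretch ν h) ∂μ ≤ 0 := by
    rw [integral_sub (integrable_meanLogStretch_mul hκ h) (integrable_const _),
      integral_meanLogStretch_mul hν hκ]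
    simpa using hdrift
  have hnonneg : ∀ g, 0 ≤ meanLogStretch ν (h * g) - meanLogStretch ν h :=
    fun g => sub_nonneg.2 (hmin _)
  have hzero := (integral_eq_zero_iff_of_nonneg hnonneg hint).1
    (hle.antisymm (integral_nonneg hnonneg))
  filter_upwards [hzero] with g hg using sub_eq_zero.1 hg

end Mean

section LightStationary

variable {ν : Measure UnitCircle} [IsProbabilityMeasure ν]

instance : Nonempty UnitCircle := (NormedSpace.sphere_nonempty.2 zero_le_one).to_subtype

theorem tendsto_measureReal_abs_det2_le (w : UnitCircle) :
    Tendsto (fun τ => ν.real {v : UnitCircle | |det2 v w| ≤ τ}) (𝓝[>] 0)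
      (𝓝 (ν.real {v : UnitCircle | det2 v w = 0})) := by
  have hcont : Continuous fun v : UnitCircle => |det2 v w| := by fun_prop
  have hinter : {v : UnitCircle | det2 v w = 0} =
      ⋂ τ > (0 : ℝ), {v : UnitCircle | |det2 v w| ≤ τ} := by
    ext v
    simp only [Set.mem_ofPred_eq, Set.mem_iInter]
    refine ⟨fun h τ hτ => by simpa [h] using hτ.le, fun h => ?_⟩
    exact abs_nonpos_iff.1 (le_of_forall_pos_le_add fun τ hτ => by simpa using h τ hτ)
  rw [hinter]
  refine (ENNReal.continuousAt_toReal (measure_ne_top _ _)).tendsto.comp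
    (tendsto_measure_biInter_gt (fun τ _ => ?_) (fun _ _ _ h v hv => hv.trans h)
      ⟨1, one_pos, measure_ne_top _ _⟩)
  exact (isClosed_le hcont continuous_const).measurableSet.nullMeasurableSet

theorem measureReal_abs_det2_le_mono {τ τ' : ℝ} (h : τ ≤ τ') (w : UnitCircle) :
    ν.real {v : UnitCircle | |det2 v w| ≤ τ} ≤ ν.real {v : UnitCircle | |det2 v w| ≤ τ'} :=
  measureReal_mono fun _ hv => le_trans hv h

theorem exists_uniform_measureReal_abs_det2_le
    (hlight : ∀ w : UnitCircle, ν.real {v : UnitCircle | det2 v w = 0} < 1 / 2) :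
    ∃ τ > 0, ∃ β < 1 / 2, ∀ w : UnitCircle, ν.real {v : UnitCircle | |det2 v w| ≤ τ} ≤ β := by
  suffices h : ∃ τ > 0, ∃ β < 1 / 2, ∀ w ∈ (Set.univ : Set UnitCircle),
      ν.real {v : UnitCircle | |det2 v w| ≤ τ} ≤ β by simpa using h
  refine isCompact_univ.induction_on (p := fun S : Set UnitCircle => ∃ τ > 0, ∃ β < 1 / 2,
    ∀ w ∈ S, ν.real {v : UnitCircle | |det2 v w| ≤ τ} ≤ β) ?_ ?_ ?_ ?_
  · exact ⟨1, one_pos, 0, by norm_num, by simp⟩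
  · rintro S T hST ⟨τ, hτ, β, hβ, h⟩
    exact ⟨τ, hτ, β, hβ, fun w hw => h w (hST hw)⟩
  · rintro S T ⟨τ, hτ, β, hβ, h⟩ ⟨τ', hτ', β', hβ', h'⟩
    refine ⟨min τ τ', lt_min hτ hτ', max β β', max_lt hβ hβ', ?_⟩
    rintro w (hw | hw)
    · exact (measureReal_abs_det2_le_mono (min_le_left _ _) w).trans
        ((h w hw).trans (le_max_left _ _))
    · exact (measureReal_abs_det2_le_mono (min_le_right _ _) w).trans
        ((h' w hw).trans (le_max_right _ _))
  · rintro w -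
    obtain ⟨β, hwβ, hβ⟩ := exists_between (hlight w)
    obtain ⟨τ, hτβ, hτ⟩ := (((tendsto_measureReal_abs_det2_le w).eventually_lt_const hwβ).and
      self_mem_nhdsWithin).exists
    have hτ : 0 < τ := hτ
    have hcont : Continuous fun w' : UnitCircle => |det2 w' w| := by fun_prop
    have hnear : ∀ᶠ w' : UnitCircle in 𝓝 w, |det2 w' w| < τ / 2 :=
      hcont.continuousAt.eventually_lt_const (by simpa [det2, mul_comm] using hτ)
    refine ⟨_, mem_nhdsWithin_of_mem_nhds hnear, τ / 2, half_pos hτ, β, hβ, fun w' hw' => ?_⟩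
    have hw' : |det2 w' w| < τ / 2 := hw'
    have hsub : {v : UnitCircle | |det2 v w'| ≤ τ / 2} ⊆ {v : UnitCircle | |det2 v w| ≤ τ} :=
      fun v (hv : |det2 v w'| ≤ τ / 2) => (abs_det2_le_add w' v w).trans (by linarith)
    exact (measureReal_mono hsub).trans hτβ.le

theorem le_meanLogStretch {τ β : ℝ} (hτ : 0 < τ) (hτ₁ : τ ≤ 1)
    (hβ : ∀ w : UnitCircle, ν.real {v : UnitCircle | |det2 v w| ≤ 2 * τ} ≤ β) (h : SL2) :
    (1 - 2 * β) * kappa h + Real.log τ ≤ meanLogStretch ν h := by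
  set B : Set UnitCircle := {v | stretch h v < τ * opNorm h}
  have hBmeas : MeasurableSet B := (isOpen_lt (by fun_prop) (by fun_prop)).measurableSet
  have hBβ : ν.real B ≤ β := by
    rcases B.eq_empty_or_nonempty with hempty | ⟨w, hw⟩
    · rw [hempty, measureReal_empty]
      exact measureReal_nonneg.trans (hβ (Classical.arbitrary _))
    · refine (measureReal_mono fun v hv => ?_).trans (hβ w)
      have hv : stretch h v < τ * opNorm h := hv
      have hw : stretch h w < τ * opNorm h := hw
      refine le_of_mul_le_mul_right ?_ (opNorm_pos h)
      linarith [abs_det2_mul_opNorm_le h v w]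
  have hpoint : ∀ v, Real.log τ + kappa h - 2 * kappa h * B.indicator 1 v ≤ logStretch h v := by
    intro v
    by_cases hv : v ∈ B
    · have := (abs_le.1 (abs_logStretch_le_kappa h v)).1
      have := Real.log_nonpos hτ.le hτ₁
      rw [Set.indicator_of_mem hv, Pi.one_apply]
      linarith
    · rw [Set.indicator_of_notMem hv, mul_zero, sub_zero, kappa,
        ← Real.log_mul hτ.ne' (opNorm_pos h).ne']
      exact Real.log_le_log (mul_pos hτ (opNorm_pos h)) (not_lt.1 hv)
  have hind : Integrable (B.indicator (1 : UnitCircle → ℝ)) ν :=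
    (integrable_const (1 : ℝ)).indicator hBmeas
  calc (1 - 2 * β) * kappa h + Real.log τ
      ≤ Real.log τ + kappa h - 2 * kappa h * ν.real B := by nlinarith [kappa_nonneg h]
    _ = ∫ v, (Real.log τ + kappa h - 2 * kappa h * B.indicator 1 v) ∂ν := by
        rw [integral_sub (integrable_const _) (hind.const_mul _), integral_const_mul,
          integral_indicator_one hBmeas]
        simp
    _ ≤ meanLogStretch ν h := integral_mono ((integrable_const _).sub (hind.const_mul _))
        (integrable_logStretch ν h) hpoint

theorem exists_forall_meanLogStretch_le
    (hlight : ∀ w : UnitCircle, ν.real {v : UnitCircle | det2 v w = 0} < 1 / 2) :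
    ∃ h, ∀ g, meanLogStretch ν h ≤ meanLogStretch ν g := by
  obtain ⟨τ, hτ, β, hβ, hτβ⟩ := exists_uniform_measureReal_abs_det2_le hlight
  have hmin : 0 < min (τ / 2) 1 := lt_min (half_pos hτ) one_pos
  have hbound := le_meanLogStretch hmin (min_le_right _ _) fun w =>
    (measureReal_abs_det2_le_mono (by linarith [min_le_left (τ / 2) 1]) w).trans (hτβ w)
  refine (continuous_meanLogStretch ν).exists_forall_le (tendsto_atTop_mono hbound ?_)
  exact tendsto_atTop_add_const_right _ _
    (tendsto_kappa_cocompact_atTop.const_mul_atTop (by linarith))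

theorem ae_skewness_smul_eq_zero {h k : SL2}
    (hmin : ∀ g, meanLogStretch ν h ≤ meanLogStretch ν g)
    (hk : meanLogStretch ν (k * h) = meanLogStretch ν h) :
    ∀ᵐ v ∂ν, skewness k (h • v : UnitCircle) = 0 := by
  obtain ⟨r, hr⟩ := exists_two_mul_logStretch_le k
  have hkint : ∫ v, logStretch k (h • v) ∂ν = 0 := by linarith [meanLogStretch_mul ν k h]
  have hrint : 0 ≤ ∫ v, logStretch r (h • v) ∂ν := by
    linarith [meanLogStretch_mul ν r h, hmin (r * h)]
  have hnonneg : ∀ v : UnitCircle, 0 ≤ logStretch k (h • v) - 2 * logStretch r (h • v) :=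
    fun v => sub_nonneg.2 (hr _).1
  have hk' := integrable_logStretch_smul ν k h
  have hr' := (integrable_logStretch_smul ν r h).const_mul 2
  have hle : ∫ v, (logStretch k (h • v) - 2 * logStretch r (h • v)) ∂ν ≤ 0 := by
    rw [integral_sub hk' hr', integral_const_mul]
    linarith
  filter_upwards [(integral_eq_zero_iff_of_nonneg hnonneg (hk'.sub hr')).1
    (hle.antisymm (integral_nonneg hnonneg))] with v hv
  exact (hr _).2 (sub_eq_zero.1 hv).symm

theorem isRotation_of_ae_skewness_smul_eq_zero
    (hlight : ∀ w : UnitCircle, ν.real {v : UnitCircle | det2 v w = 0} < 1 / 2) {h k : SL2}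
    (hzero : ∀ᵐ v ∂ν, skewness k (h • v : UnitCircle) = 0) : IsRotation k := by
  obtain ⟨v₀, hv₀⟩ := hzero.exists
  by_contra hrot
  let w : UnitCircle := h⁻¹ • ⟨quarterTurn (h • v₀ : UnitCircle), by
    rw [mem_sphere_zero_iff_norm, norm_quarterTurn, norm_eq_of_mem_sphere]⟩
  have hcover : ∀ᵐ v ∂ν, v ∈ {v : UnitCircle | det2 v v₀ = 0} ∪ {v | det2 v w = 0} := by
    filter_upwards [hzero] with v hv
    rcases det2_eq_zero_of_skewness_eq_zero hrot hv hv₀ with h' | h'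
    · left
      simpa [det2_smul_smul, (stretch_pos _ _).ne'] using h'
    · right
      have hwv : det2 (h • v : UnitCircle) (h • w : UnitCircle) = 0 := by
        simpa only [w, smul_inv_smul] using h'
      simpa [det2_smul_smul, (stretch_pos _ _).ne'] using hwv
  have hone : ν.real ({v : UnitCircle | det2 v v₀ = 0} ∪ {v | det2 v w = 0}) = 1 :=
    (measureReal_congr (eventuallyEq_univ.2 hcover)).trans probReal_univ
  have := measureReal_union_le (μ := ν) {v : UnitCircle | det2 v v₀ = 0} {v | det2 v w = 0}
  rw [hone] at this
  linarith [hlight v₀, hlight w]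

theorem isSolvable_closure_measSupp_of_light {μ : Measure SL2} [IsProbabilityMeasure μ]
    (hν : IsStationaryLaw μ ν) (hκ : Integrable kappa μ)
    (hdrift : ∫ g, meanLogStretch ν g ∂μ ≤ 0)
    (hlight : ∀ w : UnitCircle, ν.real {v : UnitCircle | det2 v w = 0} < 1 / 2) :
    Group.IsSolvable (Subgroup.closure (measSupp μ)) := by
  obtain ⟨h, hmin⟩ := exists_forall_meanLogStretch_le hlight
  refine isSolvable_closure_of_isRotation_conj (h := h) fun s hs => ?_
  refine isRotation_of_ae_skewness_smul_eq_zero hlight (ae_skewness_smul_eq_zero hmin ?_)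
  rw [inv_mul_cancel_right]
  exact measSupp_subset_of_forall_meanLogStretch_le hν hκ hdrift hmin hs

end LightStationary

section HeavyStationary

/-- The projective line spanned by a point of the unit circle. -/
def line (v : UnitCircle) : Projectivization ℝ Plane :=
  Projectivization.mk ℝ v (ne_zero_of_mem_unit_sphere v)

theorem line_smul (g : SL2) (v : UnitCircle) : line (g • v) = g • line v := by
  rw [line, line, Projectivization.smul_mk, Projectivization.mk_eq_mk_iff']
  exact ⟨(stretch g v)⁻¹, rfl⟩

theorem line_eq_line_iff {v w : UnitCircle} : line v = line w ↔ det2 v w = 0 := by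
  rw [line, line, Projectivization.mk_eq_mk_iff']
  refine ⟨?_, fun h => ?_⟩
  · rintro ⟨c, hc⟩
    rw [← hc, det2_smul_left]
    simp [det2, mul_comm]
  · obtain ⟨c, hc⟩ := exists_smul_eq_of_det2_eq_zero (ne_zero_of_mem_unit_sphere w) h
    exact ⟨c, hc.symm⟩

theorem line_surjective : Function.Surjective line := fun ℓ => by
  induction ℓ with | h v hv =>
  refine ⟨⟨‖v‖⁻¹ • v, by simp [norm_smul, hv]⟩, ?_⟩
  rw [line, Projectivization.mk_eq_mk_iff']
  exact ⟨_, rfl⟩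

theorem preimage_line_singleton (w : UnitCircle) :
    line ⁻¹' {line w} = {v : UnitCircle | det2 v w = 0} :=
  Set.ext fun _ => line_eq_line_iff

theorem isClosed_line_preimage (ℓ : Projectivization ℝ Plane) : IsClosed (line ⁻¹' {ℓ}) := by
  obtain ⟨w, rfl⟩ := line_surjective ℓ
  rw [preimage_line_singleton]
  exact isClosed_eq (by fun_prop) (by fun_prop)

theorem smul_preimage_line (g : SL2) (ℓ : Projectivization ℝ Plane) :
    (g • ·) ⁻¹' (line ⁻¹' {ℓ}) = line ⁻¹' {g⁻¹ • ℓ} := by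
  ext v
  simp [line_smul, eq_inv_smul_iff]

variable {ν : Measure UnitCircle} [IsProbabilityMeasure ν]

theorem sum_measure_line_le_one (S : Finset (Projectivization ℝ Plane)) :
    ∑ ℓ ∈ S, ν (line ⁻¹' {ℓ}) ≤ 1 := by
  rw [← measure_biUnion_finset (fun ℓ _ ℓ' _ h => (Set.disjoint_singleton.2 h).preimage line)
    fun ℓ _ => (isClosed_line_preimage ℓ).measurableSet]
  exact prob_le_one

theorem exists_subset_pair_of_measure_line {S : Set (Projectivization ℝ Plane)}
    (hS : ∀ ℓ ∈ S, 1 / 2 ≤ ν (line ⁻¹' {ℓ})) {ℓ₀ : Projectivization ℝ Plane} (h₀ : ℓ₀ ∈ S) :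
    ∃ ℓ₁, S = {ℓ₀, ℓ₁} := by
  classical
  by_cases h : ∃ ℓ₁ ∈ S, ℓ₁ ≠ ℓ₀
  · obtain ⟨ℓ₁, h₁, hne⟩ := h
    refine ⟨ℓ₁, Set.Subset.antisymm (fun ℓ hℓ => ?_) (Set.pair_subset h₀ h₁)⟩
    by_contra hℓ'
    rw [Set.mem_insert_iff, Set.mem_singleton_iff, not_or] at hℓ'
    have hsum := sum_measure_line_le_one (ν := ν) {ℓ, ℓ₀, ℓ₁}
    rw [Finset.sum_insert (by simp [hℓ']), Finset.sum_pair hne.symm] at hsum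
    have hthree := (add_le_add (hS ℓ hℓ) (add_le_add (hS ℓ₀ h₀) (hS ℓ₁ h₁))).trans hsum
    rw [ENNReal.add_halves] at hthree
    exact absurd hthree (not_le.2 (by
      rw [add_comm]; exact ENNReal.lt_add_right ENNReal.one_ne_top (by simp)))
  · push Not at h
    exact ⟨ℓ₀, by rw [Set.pair_eq_singleton]; exact (Set.eq_singleton_iff_unique_mem.2 ⟨h₀, h⟩)⟩

theorem isClosed_stabilizer_pair (ℓ ℓ' : Projectivization ℝ Plane) :
    IsClosed (MulAction.stabilizer SL2 ({ℓ, ℓ'} : Set (Projectivization ℝ Plane)) : Set SL2) := by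
  have hset : (MulAction.stabilizer SL2 ({ℓ, ℓ'} : Set (Projectivization ℝ Plane)) : Set SL2) =
      {g | g • ℓ ∈ ({ℓ, ℓ'} : Set _)} ∩ {g | g • ℓ' ∈ ({ℓ, ℓ'} : Set _)} := by
    ext g
    rw [SetLike.mem_coe, MulAction.mem_stabilizer_set' (Set.toFinite _)]
    simp
  have hclosed : ∀ ℓ'', IsClosed {g : SL2 | g • ℓ'' ∈ ({ℓ, ℓ'} : Set _)} := by
    intro ℓ''
    obtain ⟨v, rfl⟩ := line_surjective ℓ''
    have := (isClosed_line_preimage ℓ).union (isClosed_line_preimage ℓ')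
    have hcont : Continuous fun g : SL2 => g • v := continuous_id.smul continuous_const
    simpa [Set.preimage, line_smul] using this.preimage hcont
  rw [hset]
  exact (hclosed ℓ).inter (hclosed ℓ')

/- The lines of maximal mass are at most two, and stationarity makes their set invariant. -/
theorem isSolvable_closure_measSupp_of_heavy {μ : Measure SL2} [IsProbabilityMeasure μ]
    (hν : IsStationaryLaw μ ν) {ℓ : Projectivization ℝ Plane} (hℓ : 1 / 2 ≤ ν (line ⁻¹' {ℓ})) :
    Group.IsSolvable (Subgroup.closure (measSupp μ)) := by
  obtain ⟨ℓ', hheavy⟩ := exists_subset_pair_of_measure_line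
    (S := {ℓ | 1 / 2 ≤ ν (line ⁻¹' {ℓ})}) (fun _ => id) hℓ
  obtain ⟨ℓ₀, h₀, hmax⟩ := Set.exists_max_image {ℓ | 1 / 2 ≤ ν (line ⁻¹' {ℓ})}
    (fun ℓ => ν (line ⁻¹' {ℓ})) (by rw [hheavy]; exact Set.toFinite _) ⟨ℓ, hℓ⟩
  have hle : ∀ ℓ, ν (line ⁻¹' {ℓ}) ≤ ν (line ⁻¹' {ℓ₀}) := fun ℓ =>
    (le_total (1 / 2) (ν (line ⁻¹' {ℓ}))).elim (hmax ℓ) fun h => h.trans h₀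
  obtain ⟨ℓ₁, hpair⟩ := exists_subset_pair_of_measure_line
    (S := {ℓ | ν (line ⁻¹' {ℓ}) = ν (line ⁻¹' {ℓ₀})}) (fun ℓ hℓ => h₀.trans_eq hℓ.symm) rfl
  have hinv : ∀ ℓ ∈ ({ℓ₀, ℓ₁} : Set _), ∀ᵐ g ∂μ, g⁻¹ • ℓ ∈ ({ℓ₀, ℓ₁} : Set _) := by
    rw [← hpair]
    intro ℓ hℓ
    have hmean : ν (line ⁻¹' {ℓ}) = ∫⁻ g, ν (line ⁻¹' {g⁻¹ • ℓ}) ∂μ := by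
      rw [hν.measure_eq_lintegral (isClosed_line_preimage ℓ).measurableSet]
      simp only [smul_preimage_line]
    refine ae_eq_of_ae_le_of_lintegral_le (.of_forall fun g => hle _) ?_ aemeasurable_const ?_
    · rw [← hmean]; exact measure_ne_top _ _
    · rw [← hmean, hℓ]; simp
  have hsupp : measSupp μ ⊆ MulAction.stabilizer SL2 ({ℓ₀, ℓ₁} : Set _) := by
    refine measSupp_subset_of_ae_mem (isClosed_stabilizer_pair ℓ₀ ℓ₁) ?_
    filter_upwards [hinv ℓ₀ (by simp), hinv ℓ₁ (by simp)] with g hg₀ hg₁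
    rw [SetLike.mem_coe, ← inv_mem_iff, MulAction.mem_stabilizer_set' (Set.toFinite _)]
    rintro ℓ (rfl | rfl)
    exacts [hg₀, hg₁]
  have := isSolvable_stabilizer_pair ℓ₀ ℓ₁
  exact isSolvable_of_le ((Subgroup.closure_le _).2 hsupp)

end HeavyStationary

/- Furstenberg's theorem on the positivity of the Lyapunov exponent. -/
theorem integral_meanLogStretch_pos {μ : Measure SL2} [IsProbabilityMeasure μ]
    (hκ : Integrable kappa μ) (hμ : ZariskiDense μ) {ν : Measure UnitCircle}
    [IsProbabilityMeasure ν] (hν : IsStationaryLaw μ ν) :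
    0 < ∫ g, meanLogStretch ν g ∂μ := by
  by_contra! hdrift
  refine hμ ?_
  by_cases hlight : ∀ w : UnitCircle, ν.real {v : UnitCircle | det2 v w = 0} < 1 / 2
  · exact isSolvable_closure_measSupp_of_light hν hκ hdrift hlight
  · push Not at hlight
    obtain ⟨w, hw⟩ := hlight
    refine isSolvable_closure_measSupp_of_heavy hν (ℓ := line w) ?_
    rw [preimage_line_singleton, ← ofReal_measureReal]
    exact (ENNReal.ofReal_le_ofReal hw).trans' (by simp)

/-! ### The duality between stationary measures and coboundaries -/

section Duality

variable {K : Type*} [TopologicalSpace K] [CompactSpace K]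

theorem exists_isProbabilityMeasure_integral_eq [T2Space K] [MeasurableSpace K] [BorelSpace K]
    (Λ : C(K, ℝ) →ₗ[ℝ] ℝ) (hpos : ∀ f : C(K, ℝ), (∀ v, 0 ≤ f v) → 0 ≤ Λ f) (hone : Λ 1 = 1) :
    ∃ ν : Measure K, IsProbabilityMeasure ν ∧ ∀ f : C(K, ℝ), ∫ v, f v ∂ν = Λ f := by
  let Λc : CompactlySupportedContinuousMap K ℝ →ₗ[ℝ] ℝ :=
    { toFun := fun f => Λ f
      map_add' := fun f g => Λ.map_add f g
      map_smul' := fun c f => Λ.map_smul c f }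
  let L : CompactlySupportedContinuousMap K ℝ →ₚ[ℝ] ℝ :=
    PositiveLinearMap.mk₀ Λc fun f hf => hpos _ fun v => hf v
  have hint : ∀ f : C(K, ℝ), ∫ v, f v ∂(RealRMK.rieszMeasure L) = Λ f := fun f =>
    RealRMK.integral_rieszMeasure L (CompactlySupportedContinuousMap.continuousMapEquiv f)
  refine ⟨_, ⟨?_⟩, hint⟩
  have := hint 1
  simp only [ContinuousMap.one_apply, integral_const, smul_eq_mul, mul_one, hone] at this
  rwa [measureReal_def, ENNReal.toReal_eq_one_iff] at this

theorem nonpos_and_nonneg_of_forall_mul_lt {x u : ℝ} (h : ∀ c > 0, c * x < u) :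
    x ≤ 0 ∧ 0 ≤ u := by
  constructor
  · by_contra! hx
    have := h (|u| / x) (lt_of_le_of_ne (by positivity) fun h0 => ?_)
    · rw [div_mul_cancel₀ _ hx.ne'] at this
      exact this.not_ge (le_abs_self u)
    · have := h 1 one_pos
      rw [eq_comm, div_eq_zero_iff, abs_eq_zero] at h0
      rcases h0 with rfl | h0 <;> linarith
  · have hlim : Tendsto (fun c : ℝ => c * x) (𝓝[>] 0) (𝓝 (0 * x)) :=
      (continuous_id.mul continuous_const).continuousWithinAt
    simpa using le_of_tendsto hlim (eventually_mem_nhdsWithin.mono fun c hc => (h c hc).le)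

theorem exists_strongDual_of_forall_not_pos (D : Submodule ℝ C(K, ℝ)) (f : C(K, ℝ))
    (hD : ∀ d ∈ D, ¬∀ v, 0 < f v + d v) :
    ∃ F : StrongDual ℝ C(K, ℝ), (∀ φ : C(K, ℝ), (∀ v, 0 < φ v) → F φ ≤ 0) ∧ F 1 < 0 ∧
      (∀ d ∈ D, F d = 0) ∧ 0 ≤ F f := by
  let cone : Set C(K, ℝ) := {φ | ∀ v, 0 < φ v}
  have hopen : IsOpen cone := by
    simpa [cone, Set.MapsTo] using
      ContinuousMap.isOpen_setOfPred_mapsTo (X := K) isCompact_univ (isOpen_Ioi (a := (0 : ℝ)))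
  have hconvex : Convex ℝ cone := fun φ hφ ψ hψ a b ha hb hab v =>
    (convex_Ioi (0 : ℝ)) (hφ v) (hψ v) ha hb hab
  have hdisj : Disjoint cone ((f + ·) '' D) := by
    rw [Set.disjoint_right]
    rintro _ ⟨d, hd, rfl⟩ hpos
    exact hD d hd hpos
  obtain ⟨F, u, hcone, hu⟩ := geometric_hahn_banach_open hconvex hopen (D.convex.translate f) hdisj
  have hu : ∀ d ∈ D, u ≤ F f + F d := fun d hd => by
    rw [← map_add]; exact hu _ ⟨d, hd, rfl⟩
  have huf : u ≤ F f := by simpa using hu 0 D.zero_mem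
  have hscale : ∀ φ ∈ cone, ∀ c > 0, c * F φ < u := fun φ hφ c hc => by
    simpa using hcone (c • φ) fun v => mul_pos hc (hφ v)
  have hbound := fun φ hφ => nonpos_and_nonneg_of_forall_mul_lt (hscale φ hφ)
  refine ⟨F, fun φ hφ => (hbound φ hφ).1, ?_, fun d hd => by_contra fun h => ?_,
    (hbound 1 fun _ => one_pos).2.trans huf⟩
  · have hmem : f + (‖f‖ + 1) • 1 ∈ cone := fun v => by
      have := neg_le_of_abs_le (f.norm_coe_le_norm v)
      simp only [ContinuousMap.add_apply, ContinuousMap.smul_apply, ContinuousMap.one_apply,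
        smul_eq_mul]
      linarith
    have := hcone _ hmem
    rw [map_add, map_smul, smul_eq_mul] at this
    nlinarith [norm_nonneg f]
  · have := hu (((u - F f - 1) / F d) • d) (D.smul_mem _ hd)
    rw [map_smul, smul_eq_mul, div_mul_cancel₀ _ h] at this
    linarith

theorem exists_pos_add_or_exists_isProbabilityMeasure [T2Space K] [MeasurableSpace K]
    [BorelSpace K] (D : Submodule ℝ C(K, ℝ)) (f : C(K, ℝ)) :
    (∃ d ∈ D, ∀ v, 0 < f v + d v) ∨
      ∃ ν : Measure K, IsProbabilityMeasure ν ∧ (∀ d ∈ D, ∫ v, d v ∂ν = 0) ∧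
        ∫ v, f v ∂ν ≤ 0 := by
  refine or_iff_not_imp_left.2 fun h => ?_
  push Not at h
  obtain ⟨F, hF, hF_one, hFD, hFf⟩ := exists_strongDual_of_forall_not_pos D f fun d hd hpos => by
    obtain ⟨v, hv⟩ := h d hd
    exact hv.not_gt (hpos v)
  have hF_nonpos : ∀ φ : C(K, ℝ), (∀ v, 0 ≤ φ v) → F φ ≤ 0 := fun φ hφ => by
    refine le_of_forall_pos_le_add fun ε hε => ?_
    have := hF (φ + (ε / -F 1) • 1) fun v =>
      add_pos_of_nonneg_of_pos (hφ v) (mul_pos (div_pos hε (neg_pos.2 hF_one)) one_pos)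
    rw [map_add, map_smul, smul_eq_mul, div_neg, neg_mul, div_mul_cancel₀ _ hF_one.ne] at this
    linarith
  have hinv : (F 1)⁻¹ ≤ 0 := inv_nonpos.2 hF_one.le
  obtain ⟨ν, hν, hint⟩ := exists_isProbabilityMeasure_integral_eq ((F 1)⁻¹ • F.toLinearMap)
    (fun φ hφ => mul_nonneg_of_nonpos_of_nonpos hinv (hF_nonpos φ hφ)) (by simp [hF_one.ne])
  refine ⟨ν, hν, fun d hd => ?_, ?_⟩
  · simp [hint, hFD d hd]
  · rw [hint]
    exact mul_nonpos_of_nonpos_of_nonneg hinv hFf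

end Duality

section MarkovOperator

variable {G V : Type*} [TopologicalSpace G] [MeasurableSpace G] [OpensMeasurableSpace G]
  [SMul G V] [TopologicalSpace V] [CompactSpace V] [ContinuousSMul G V]
  (μ : Measure G) [IsProbabilityMeasure μ]

theorem integrable_comp_smul (φ : C(V, ℝ)) (v : V) : Integrable (fun g => φ (g • v)) μ :=
  .of_bound (φ.continuous.comp (continuous_id.smul continuous_const)).aestronglyMeasurable ‖φ‖
    (.of_forall fun _ => φ.norm_coe_le_norm _)

variable [FirstCountableTopology V]

/-- The Markov operator `φ ↦ (v ↦ ∫ φ(g • v) dμ(g))` of the random walk of law `μ`. -/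
def markovOperator : C(V, ℝ) →ₗ[ℝ] C(V, ℝ) where
  toFun φ := ⟨fun v => ∫ g, φ (g • v) ∂μ, continuous_of_dominated
    (fun v => (integrable_comp_smul μ φ v).aestronglyMeasurable)
    (fun _ => .of_forall fun _ => φ.norm_coe_le_norm _) (integrable_const ‖φ‖)
    (.of_forall fun g => φ.continuous.comp (continuous_const_smul g))⟩
  map_add' φ ψ := ContinuousMap.ext fun v =>
    integral_add (integrable_comp_smul μ φ v) (integrable_comp_smul μ ψ v)
  map_smul' c _ := ContinuousMap.ext fun _ => integral_const_mul c _

theorem markovOperator_apply (φ : C(V, ℝ)) (v : V) :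
    markovOperator μ φ v = ∫ g, φ (g • v) ∂μ := rfl

variable {μ} in
theorem isStationaryLaw_of_integral_markovOperator [HasOuterApproxClosed V] [MeasurableSpace V]
    [BorelSpace V] [MeasurableSMul₂ G V] {ν : Measure V} [IsProbabilityMeasure ν]
    (h : ∀ φ : C(V, ℝ), ∫ v, markovOperator μ φ v ∂ν = ∫ v, φ v ∂ν) : IsStationaryLaw μ ν := by
  have hsmul : Measurable fun p : G × V => p.1 • p.2 := measurable_smul
  have := Measure.isProbabilityMeasure_map (μ := μ.prod ν) hsmul.aemeasurable
  refine ext_of_forall_integral_eq_of_IsFiniteMeasure fun f => ?_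
  have hf : Integrable (fun p : G × V => f (p.1 • p.2)) (μ.prod ν) :=
    .of_bound (f.continuous.measurable.comp hsmul).aestronglyMeasurable ‖f‖
      (.of_forall fun _ => f.norm_coe_le_norm _)
  rw [integral_map hsmul.aemeasurable f.continuous.measurable.aestronglyMeasurable,
    integral_prod_symm _ hf]
  exact h f.toContinuousMap

end MarkovOperator

section Drift

variable {μ : Measure SL2}

theorem integrable_logStretch_left (hκ : Integrable kappa μ) (v : UnitCircle) :
    Integrable (fun g => logStretch g v) μ :=
  hκ.mono' (continuous_logStretch continuous_id continuous_const).aestronglyMeasurable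
    (.of_forall fun g => abs_logStretch_le_kappa g v)

theorem continuous_integral_logStretch (hκ : Integrable kappa μ) :
    Continuous fun v => ∫ g, logStretch g v ∂μ := by
  refine continuous_of_dominated (fun v => (integrable_logStretch_left hκ v).aestronglyMeasurable)
    (fun v => .of_forall fun g => abs_logStretch_le_kappa g v) hκ (.of_forall fun g => ?_)
  fun_prop

variable [IsProbabilityMeasure μ]

/- If there were no such `φ`, duality would give a stationary measure of nonpositive drift. -/
theorem exists_forall_pos_drift (hκ : Integrable kappa μ) (hμ : ZariskiDense μ) :
    ∃ φ : C(UnitCircle, ℝ), ∃ c > 0, ∀ v,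
      c ≤ ∫ g, (logStretch g v + (φ (g • v) - φ v)) ∂μ := by
  let f : C(UnitCircle, ℝ) := ⟨_, continuous_integral_logStretch hκ⟩
  rcases exists_pos_add_or_exists_isProbabilityMeasure
      (LinearMap.range (markovOperator μ - LinearMap.id)) f with
    ⟨_, ⟨φ, rfl⟩, hpos⟩ | ⟨ν, hν, hD, hf⟩
  · obtain ⟨v₀, -, hmin⟩ := isCompact_univ.exists_isMinOn Set.univ_nonempty
      (f + (markovOperator μ - LinearMap.id : C(UnitCircle, ℝ) →ₗ[ℝ] _) φ).continuous.continuousOn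
    refine ⟨φ, _, hpos v₀, fun v => (hmin (Set.mem_univ v)).trans_eq ?_⟩
    have hsub : Integrable (fun g => φ (g • v) - φ v) μ :=
      (integrable_comp_smul μ φ v).sub (integrable_const _)
    rw [integral_add (integrable_logStretch_left hκ v) hsub,
      integral_sub (integrable_comp_smul μ φ v) (integrable_const _)]
    simp [f, markovOperator_apply]
  · exfalso
    have hstat : IsStationaryLaw μ ν := isStationaryLaw_of_integral_markovOperator fun φ => by
      have := hD _ ⟨φ, rfl⟩
      simp only [LinearMap.sub_apply, LinearMap.id_apply, ContinuousMap.sub_apply] at this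
      rwa [integral_sub, sub_eq_zero] at this
      · exact (markovOperator μ φ).continuous.integrable_of_hasCompactSupport
          (.of_compactSpace _)
      · exact φ.continuous.integrable_of_hasCompactSupport (.of_compactSpace _)
    have hint : Integrable (Function.uncurry fun g v => logStretch g v) (μ.prod ν) :=
      (hκ.comp_fst ν).mono' (continuous_logStretch continuous_fst
        continuous_snd).aestronglyMeasurable
        (.of_forall fun p => abs_logStretch_le_kappa p.1 p.2)
    exact (integral_meanLogStretch_pos hκ hμ hstat).not_ge
      ((integral_integral_swap hint).trans_le hf)

end Drift

/-! ### Contraction -/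

section ExponentialMoments

variable {Ω : Type*} [MeasurableSpace Ω] {μ : Measure Ω}

theorem integrable_of_abs_le_of_integrable_exp_mul {X W : Ω → ℝ} {ε : ℝ} (hε : 0 < ε)
    (hX : AEStronglyMeasurable X μ) (hXW : ∀ ω, |X ω| ≤ W ω)
    (hW : Integrable (fun ω => Real.exp (ε * W ω)) μ) : Integrable X μ := by
  refine (hW.div_const ε).mono' hX (.of_forall fun ω => (hXW ω).trans ?_)
  rw [le_div_iff₀' hε]
  linarith [Real.add_one_le_exp (ε * W ω)]

theorem exp_le_one_add_add_sq_mul_exp_abs (x : ℝ) :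
    Real.exp x ≤ 1 + x + x ^ 2 * Real.exp |x| := by
  have h := Complex.norm_exp_sub_sum_le_norm_mul_exp x 2
  simp only [Finset.sum_range_succ, Finset.sum_range_zero, zero_add, pow_zero, pow_one,
    Nat.factorial, Nat.cast_one, div_one, Complex.norm_real, Real.norm_eq_abs, sq_abs] at h
  norm_cast at h
  linarith [(abs_le.1 h).2]

theorem exp_neg_mul_le {ε δ y W : ℝ} (hδ : 0 ≤ δ) (hδε : δ ≤ ε / 2) (hε : 0 < ε)
    (hy : |y| ≤ W) :
    Real.exp (-(δ * y)) ≤ 1 - δ * y + δ ^ 2 * (8 / ε ^ 2 * Real.exp (ε * W)) := by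
  have hquad := Real.quadratic_le_exp_of_nonneg (x := ε * |y| / 2) (by positivity)
  have hsq : y ^ 2 ≤ 8 / ε ^ 2 * Real.exp (ε * |y| / 2) := by
    rw [div_mul_eq_mul_div, le_div_iff₀ (by positivity), ← sq_abs y]
    nlinarith [mul_nonneg hε.le (abs_nonneg y)]
  have hbound : y ^ 2 * Real.exp (δ * |y|) ≤ 8 / ε ^ 2 * Real.exp (ε * W) :=
    calc y ^ 2 * Real.exp (δ * |y|)
        ≤ 8 / ε ^ 2 * Real.exp (ε * |y| / 2) * Real.exp (ε * |y| / 2) := by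
          gcongr; nlinarith [abs_nonneg y]
      _ = 8 / ε ^ 2 * Real.exp (ε * |y|) := by
          rw [mul_assoc, ← Real.exp_add, add_halves]
      _ ≤ 8 / ε ^ 2 * Real.exp (ε * W) := by gcongr
  have hexp := exp_le_one_add_add_sq_mul_exp_abs (-(δ * y))
  rw [abs_neg, abs_mul, abs_of_nonneg hδ] at hexp
  nlinarith [mul_le_mul_of_nonneg_left hbound (sq_nonneg δ)]

theorem exists_forall_lintegral_exp_neg_mul_le [IsProbabilityMeasure μ] {ι : Type*}
    {Y : ι → Ω → ℝ} {W : Ω → ℝ} {ε c : ℝ} (hε : 0 < ε) (hc : 0 < c)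
    (hY : ∀ i, AEStronglyMeasurable (Y i) μ) (hYW : ∀ i ω, |Y i ω| ≤ W ω)
    (hW : Integrable (fun ω => Real.exp (ε * W ω)) μ) (hmean : ∀ i, c ≤ ∫ ω, Y i ω ∂μ) :
    ∃ δ > 0, ∃ lam > 0, ∀ i, ∫⁻ ω, .ofReal (Real.exp (-(δ * Y i ω))) ∂μ ≤
      .ofReal (Real.exp (-lam)) := by
  set K := 8 / ε ^ 2 * ∫ ω, Real.exp (ε * W ω) ∂μ with hK
  have : 0 ≤ K :=
    mul_nonneg (by positivity) (integral_nonneg fun _ => (Real.exp_pos _).le)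
  set δ := min (ε / 2) (c / (2 * (K + 1)))
  have hδ_pos : 0 < δ := lt_min (by positivity) (by positivity)
  have hδK : δ * (2 * (K + 1)) ≤ c := (le_div_iff₀ (by positivity)).1 (min_le_right _ _)
  refine ⟨δ, hδ_pos, δ * c / 2, by positivity, fun i => ?_⟩
  have hYi : Integrable (Y i) μ :=
    integrable_of_abs_le_of_integrable_exp_mul hε (hY i) (hYW i) hW
  have hpt : ∀ ω, Real.exp (-(δ * Y i ω)) ≤
      1 - δ * Y i ω + δ ^ 2 * (8 / ε ^ 2 * Real.exp (ε * W ω)) := fun ω =>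
    exp_neg_mul_le hδ_pos.le (min_le_left _ _) hε (hYW i ω)
  have hlin : Integrable (fun ω => 1 - δ * Y i ω) μ :=
    (integrable_const _).sub (hYi.const_mul δ)
  have hrem := (hW.const_mul (8 / ε ^ 2)).const_mul (δ ^ 2)
  have hint : Integrable (fun ω => Real.exp (-(δ * Y i ω))) μ :=
    (hlin.add hrem).mono' (Real.continuous_exp.comp_aestronglyMeasurable ((hY i).const_mul δ).neg)
      (.of_forall fun ω => (Real.norm_of_nonneg (Real.exp_pos _).le).trans_le (hpt ω))
  rw [← ofReal_integral_eq_lintegral_ofReal hint (.of_forall fun _ => (Real.exp_pos _).le)]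
  refine ENNReal.ofReal_le_ofReal ?_
  calc ∫ ω, Real.exp (-(δ * Y i ω)) ∂μ
      ≤ ∫ ω, (1 - δ * Y i ω + δ ^ 2 * (8 / ε ^ 2 * Real.exp (ε * W ω))) ∂μ :=
        integral_mono hint (hlin.add hrem) hpt
    _ = 1 - δ * ∫ ω, Y i ω ∂μ + δ ^ 2 * K := by
        rw [integral_add hlin hrem, integral_sub (integrable_const _) (hYi.const_mul δ)]
        simp [integral_const_mul, hK]
    _ ≤ 1 - δ * c / 2 := by nlinarith [hmean i]
    _ ≤ Real.exp (-(δ * c / 2)) := Real.one_sub_le_exp_neg _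

end ExponentialMoments

section Deviation

variable {μ : Measure SL2}

theorem HasExpMoment.exists_integrable_exp_kappa (h : HasExpMoment μ) :
    ∃ ε > 0, Integrable (fun g => Real.exp (ε * kappa g)) μ := by
  obtain ⟨ε, hε, hlt⟩ := h
  refine ⟨ε, hε, (by fun_prop : Continuous _).aestronglyMeasurable, ?_⟩
  refine (lintegral_congr fun g => ?_).trans_lt hlt
  rw [Real.rpow_def_of_pos (opNorm_pos g), mul_comm, ← Real.enorm_of_nonneg (Real.exp_pos _).le]
  rfl

theorem ZariskiDense.map_inv (hμ : ZariskiDense μ) : ZariskiDense (μ.map (·⁻¹)) := by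
  have hle : Subgroup.closure (measSupp μ) ≤ Subgroup.closure (measSupp (μ.map (·⁻¹))) := by
    refine (Subgroup.closure_le _).2 fun g hg => inv_mem_iff.1 (Subgroup.subset_closure ?_)
    intro U hU hgU
    rw [Measure.map_apply measurable_inv hU.measurableSet]
    exact hg _ (hU.preimage continuous_inv) hgU
  exact fun hs : Group.IsSolvable _ =>
    hμ (Group.isSolvable_of_isSolvable_injective (Subgroup.inclusion_injective hle))

variable [IsProbabilityMeasure μ] {ε : ℝ}

theorem abs_map_smul_sub_map_le (φ : C(UnitCircle, ℝ)) (g : SL2) (v : UnitCircle) :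
    |φ (g • v) - φ v| ≤ 2 * ‖φ‖ := by
  rw [two_mul]
  exact (norm_sub_le (φ (g • v)) (φ v)).trans
    (add_le_add (φ.norm_coe_le_norm _) (φ.norm_coe_le_norm v))

theorem exists_lintegral_exp_neg_le (hε : 0 < ε)
    (hexp : Integrable (fun g => Real.exp (ε * kappa g)) μ) (hμ : ZariskiDense μ) :
    ∃ φ : C(UnitCircle, ℝ), ∃ δ > 0, ∃ lam > 0, ∀ v,
      ∫⁻ g, .ofReal (Real.exp (-(δ * (logStretch g v + (φ (g • v) - φ v))))) ∂μ ≤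
        .ofReal (Real.exp (-lam)) := by
  obtain ⟨φ, c, hc, hdrift⟩ := exists_forall_pos_drift (integrable_of_abs_le_of_integrable_exp_mul
    hε continuous_kappa.aestronglyMeasurable (fun g => (abs_of_nonneg (kappa_nonneg g)).le) hexp) hμ
  refine ⟨φ, exists_forall_lintegral_exp_neg_mul_le (W := fun g => kappa g + 2 * ‖φ‖) hε hc
    (fun v => ?_) (fun v g => ?_) (by simpa only [mul_add, Real.exp_add] using hexp.mul_const _)
    hdrift⟩
  · exact (by fun_prop : Continuous _).aestronglyMeasurable
  · exact (abs_add_le _ _).trans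
      (add_le_add (abs_logStretch_le_kappa g v) (abs_map_smul_sub_map_le φ g v))

theorem exists_lintegral_convPow_exp_neg_logStretch_le (hε : 0 < ε)
    (hexp : Integrable (fun g => Real.exp (ε * kappa g)) μ) (hμ : ZariskiDense μ) :
    ∃ δ > 0, ∃ lam > 0, ∃ C > 0, ∀ (n : ℕ) v,
      ∫⁻ g, .ofReal (Real.exp (-(δ * logStretch g v))) ∂convPow μ n ≤
        .ofReal (C * Real.exp (-(lam * n))) := by
  obtain ⟨φ, δ, hδ, lam, hlam, hcontr⟩ := exists_lintegral_exp_neg_le hε hexp hμ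
  let F : SL2 → UnitCircle → ℝ≥0∞ := fun g v =>
    .ofReal (Real.exp (-(δ * (logStretch g v + (φ (g • v) - φ v)))))
  have hF : ∀ v, Measurable fun g => F g v := fun v =>
    (by fun_prop : Continuous _).measurable.ennreal_ofReal
  have hpow := lintegral_convPow_le_pow μ hF (fun v => by simp [F, logStretch_one])
    (fun g h v => by
      rw [← ENNReal.ofReal_mul (Real.exp_pos _).le, ← Real.exp_add]
      simp only [F, logStretch_mul, mul_smul]
      exact (congrArg _ (congrArg _ (by ring))).le) hcontr
  refine ⟨δ, hδ, lam, hlam, Real.exp (δ * (2 * ‖φ‖)), Real.exp_pos _, fun n v => ?_⟩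
  calc ∫⁻ g, .ofReal (Real.exp (-(δ * logStretch g v))) ∂convPow μ n
      ≤ ∫⁻ g, .ofReal (Real.exp (δ * (2 * ‖φ‖))) * F g v ∂convPow μ n := by
        refine lintegral_mono fun g => ?_
        rw [← ENNReal.ofReal_mul (Real.exp_pos _).le, ← Real.exp_add]
        refine ENNReal.ofReal_le_ofReal (Real.exp_le_exp.2 ?_)
        nlinarith [(abs_le.1 (abs_map_smul_sub_map_le φ g v)).2]
    _ ≤ .ofReal (Real.exp (δ * (2 * ‖φ‖))) * .ofReal (Real.exp (-lam)) ^ n := by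
        rw [lintegral_const_mul' _ _ ENNReal.ofReal_ne_top]
        gcongr
        exact hpow n v
    _ = .ofReal (Real.exp (δ * (2 * ‖φ‖)) * Real.exp (-(lam * n))) := by
        rw [← ENNReal.ofReal_pow (Real.exp_pos _).le, ← ENNReal.ofReal_mul (Real.exp_pos _).le,
          ← Real.exp_nat_mul, mul_neg, mul_comm (n : ℝ)]

theorem exists_convPow_logStretch_le_one (hε : 0 < ε)
    (hexp : Integrable (fun g => Real.exp (ε * kappa g)) μ) (hμ : ZariskiDense μ) :
    ∃ lam > 0, ∃ C > 0, ∀ (n : ℕ) v,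
      convPow μ n {g | logStretch g v ≤ 1} ≤ .ofReal (C * Real.exp (-(lam * n))) := by
  obtain ⟨δ, hδ, lam, hlam, C, hC, hint⟩ :=
    exists_lintegral_convPow_exp_neg_logStretch_le hε hexp hμ
  refine ⟨lam, hlam, Real.exp δ * C, by positivity, fun n v => ?_⟩
  have hmeas : Measurable fun g => ENNReal.ofReal (Real.exp (-(δ * logStretch g v))) :=
    (by fun_prop : Continuous _).measurable.ennreal_ofReal
  calc convPow μ n {g | logStretch g v ≤ 1}
      ≤ convPow μ n {g | .ofReal (Real.exp (-δ)) ≤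
          ENNReal.ofReal (Real.exp (-(δ * logStretch g v)))} :=
        measure_mono fun g (hg : logStretch g v ≤ 1) =>
          ENNReal.ofReal_le_ofReal (Real.exp_le_exp.2 (by nlinarith))
    _ ≤ .ofReal (C * Real.exp (-(lam * n))) / .ofReal (Real.exp (-δ)) :=
        (meas_ge_le_lintegral_div hmeas.aemeasurable (by positivity)
          ENNReal.ofReal_ne_top).trans (ENNReal.div_le_div_right (hint n v) _)
    _ = .ofReal (Real.exp δ * C * Real.exp (-(lam * n))) := by
        rw [← ENNReal.ofReal_div_of_pos (Real.exp_pos _), Real.exp_neg δ, div_inv_eq_mul]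
        congr 1; ring

theorem convPow_le_kappa_le (hexp : Integrable (fun g => Real.exp (ε * kappa g)) μ) (hε : 0 < ε)
    (n : ℕ) (x : ℝ) : convPow μ n {g | x ≤ kappa g} ≤
      .ofReal ((∫ g, Real.exp (ε * kappa g) ∂μ) ^ n * Real.exp (-(ε * x))) := by
  have hmeas : Measurable fun g => ENNReal.ofReal (Real.exp (ε * kappa g)) :=
    (by fun_prop : Continuous _).measurable.ennreal_ofReal
  have hmoment := lintegral_convPow_le_pow μ
    (F := fun g (_ : Unit) => ENNReal.ofReal (Real.exp (ε * kappa g))) (fun _ => hmeas)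
    (fun _ => by simp [kappa_one])
    (fun g h _ => by
      rw [← ENNReal.ofReal_mul (Real.exp_pos _).le, ← Real.exp_add, ← mul_add]
      gcongr; exact kappa_mul_le g h)
    (fun _ => (ofReal_integral_eq_lintegral_ofReal hexp
      (.of_forall fun _ => (Real.exp_pos _).le)).ge) n ⟨⟩
  calc convPow μ n {g | x ≤ kappa g}
      ≤ convPow μ n {g | .ofReal (Real.exp (ε * x)) ≤
          ENNReal.ofReal (Real.exp (ε * kappa g))} :=
        measure_mono fun g (hg : x ≤ kappa g) =>
          ENNReal.ofReal_le_ofReal (Real.exp_le_exp.2 (by gcongr))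
    _ ≤ .ofReal (∫ g, Real.exp (ε * kappa g) ∂μ) ^ n / .ofReal (Real.exp (ε * x)) :=
        (meas_ge_le_lintegral_div hmeas.aemeasurable (by positivity)
          ENNReal.ofReal_ne_top).trans (ENNReal.div_le_div_right hmoment _)
    _ = .ofReal ((∫ g, Real.exp (ε * kappa g) ∂μ) ^ n * Real.exp (-(ε * x))) := by
        rw [← ENNReal.ofReal_pow (integral_nonneg fun _ => (Real.exp_pos _).le),
          ← ENNReal.ofReal_div_of_pos (Real.exp_pos _), Real.exp_neg, div_eq_mul_inv]

end Deviation

/-- Deviation bounds for the random walk of law `μ`, uniform in the starting point: up to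
probability `e^{-lam n}`, neither the walk nor its inverse has a stretching factor of order one at
time `n`, and the norm has growth rate at most `A`, with exponential tails of rate `ε`. -/
structure HasDeviationBounds (μ : Measure SL2) (lam ε A C : ℝ) : Prop where
  lam_pos : 0 < lam
  eps_pos : 0 < ε
  rate_pos : 0 < A
  const_pos : 0 < C
  logStretch_le_one : ∀ (n : ℕ) v,
    convPow μ n {g | logStretch g v ≤ 1} ≤ .ofReal (C * Real.exp (-(lam * n)))
  logStretch_inv_le_one : ∀ (n : ℕ) v,
    convPow μ n {g | logStretch g⁻¹ v ≤ 1} ≤ .ofReal (C * Real.exp (-(lam * n)))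
  le_kappa : ∀ (n : ℕ) x,
    convPow μ n {g | x ≤ kappa g} ≤ .ofReal (Real.exp (ε * (A * n - x) - lam * n))

theorem exists_hasDeviationBounds {μ : Measure SL2} [IsProbabilityMeasure μ]
    (hexp : HasExpMoment μ) (hμ : ZariskiDense μ) :
    ∃ lam ε A C, HasDeviationBounds μ lam ε A C := by
  obtain ⟨ε, hε, hexp⟩ := hexp.exists_integrable_exp_kappa
  have hinv : Measurable fun g : SL2 => g⁻¹ := measurable_inv
  have := Measure.isProbabilityMeasure_map (μ := μ) hinv.aemeasurable
  have hexp_inv : Integrable (fun g => Real.exp (ε * kappa g)) (μ.map (·⁻¹)) := by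
    rw [integrable_map_measure (by fun_prop : Continuous _).aestronglyMeasurable hinv.aemeasurable]
    simpa only [Function.comp_def, kappa_inv] using hexp
  obtain ⟨l₁, hl₁, C₁, hC₁, h₁⟩ := exists_convPow_logStretch_le_one hε hexp hμ
  obtain ⟨l₂, hl₂, C₂, -, h₂⟩ := exists_convPow_logStretch_le_one hε hexp_inv hμ.map_inv
  set B := ∫ g, Real.exp (ε * kappa g) ∂μ with hB
  have hB_one : 1 ≤ B := by
    simpa using integral_mono (integrable_const (1 : ℝ)) hexp fun g =>
      Real.one_le_exp (mul_nonneg hε.le (kappa_nonneg g))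
  refine ⟨min l₁ l₂, ε, (Real.log B + min l₁ l₂) / ε, max C₁ C₂, lt_min hl₁ hl₂, hε,
    div_pos (add_pos_of_nonneg_of_pos (Real.log_nonneg hB_one) (lt_min hl₁ hl₂)) hε,
    lt_max_of_lt_left hC₁, fun n v => (h₁ n v).trans ?_, fun n v => ?_, fun n x => ?_⟩
  · gcongr
    exacts [le_max_left _ _, min_le_left _ _]
  · refine (le_of_eq ?_).trans ((h₂ n v).trans ?_)
    · rw [convPow_map_inv, Measure.map_apply hinv
        (measurableSet_le (by fun_prop : Continuous _).measurable measurable_const)]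
      rfl
    · gcongr
      exacts [le_max_right _ _, min_le_right _ _]
  · refine (convPow_le_kappa_le hexp hε n x).trans (ENNReal.ofReal_le_ofReal (le_of_eq ?_))
    rw [← hB, ← Real.exp_log (one_pos.trans_le hB_one), ← Real.exp_nat_mul, ← Real.exp_add]
    congr 1
    rw [Real.log_exp]
    field_simp
    ring

/-! ### Renewal bounds for cocycles -/

section Renewal

variable {M V : Type*} [Monoid M] [MeasurableSpace M] {μ : Measure M} {c : M → V → ℝ}

theorem ofReal_exp_neg_mul_abs_le_tsum {q : ℝ} (hq : 0 ≤ q) (y : ℝ) :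
    ENNReal.ofReal (Real.exp (-(q * |y|))) ≤
      ∑' j : ℤ, .ofReal (Real.exp (q - q * |(j : ℝ)|)) *
        (Set.Icc (0 : ℝ) 1).indicator 1 (y - j) := by
  refine le_trans ?_ (ENNReal.le_tsum ⌊y⌋)
  have hmem : y - ⌊y⌋ ∈ Set.Icc (0 : ℝ) 1 := ⟨Int.fract_nonneg y, (Int.fract_lt_one y).le⟩
  rw [Set.indicator_of_mem hmem, Pi.one_apply, mul_one]
  refine ENNReal.ofReal_le_ofReal (Real.exp_le_exp.2 ?_)
  have habs : |(⌊y⌋ : ℝ)| ≤ |y| + 1 := by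
    have := abs_sub_abs_le_abs_sub (⌊y⌋ : ℝ) y
    rw [abs_sub_comm, abs_of_nonneg hmem.1] at this
    linarith [hmem.2]
  nlinarith

theorem tsum_ofReal_exp_sub_mul_abs_ne_top {q : ℝ} (hq : 0 < q) :
    ∑' j : ℤ, ENNReal.ofReal (Real.exp (q - q * |(j : ℝ)|)) ≠ ∞ := by
  have hnat : Summable fun n : ℕ => Real.exp (q - q * n) := by
    simpa only [sub_eq_add_neg, Real.exp_add, ← mul_neg, mul_comm q, mul_assoc] using
      (Real.summable_exp_nat_mul_iff.2 (neg_neg_of_pos hq)).mul_left (Real.exp q)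
  exact (Summable.of_nat_of_neg (by simpa using hnat) (by simpa using hnat)).tsum_ofReal_ne_top

theorem exists_tsum_lintegral_exp_neg_abs_le (hc : ∀ v, Measurable fun g => c g v) {K : ℝ≥0∞}
    (hK : ∀ v t, ∑' n, convPow μ n {g | c g v - t ∈ Set.Icc 0 1} ≤ K) (hK_top : K ≠ ∞) {q : ℝ}
    (hq : 0 < q) : ∃ L ≠ ∞, ∀ v t,
      ∑' n, ∫⁻ g, .ofReal (Real.exp (-(q * |t - c g v|))) ∂convPow μ n ≤ L := by
  refine ⟨_, ENNReal.mul_ne_top (tsum_ofReal_exp_sub_mul_abs_ne_top hq) hK_top, fun v t => ?_⟩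
  have hmeas : ∀ j : ℤ, MeasurableSet {g | c g v - (t + j) ∈ Set.Icc (0 : ℝ) 1} := fun j =>
    ((hc v).sub_const _) measurableSet_Icc
  calc ∑' n, ∫⁻ g, .ofReal (Real.exp (-(q * |t - c g v|))) ∂convPow μ n
      ≤ ∑' n, ∫⁻ g, ∑' j : ℤ, .ofReal (Real.exp (q - q * |(j : ℝ)|)) *
          {g | c g v - (t + j) ∈ Set.Icc (0 : ℝ) 1}.indicator 1 g ∂convPow μ n := by
        gcongr with n g
        rw [abs_sub_comm]
        refine (ofReal_exp_neg_mul_abs_le_tsum hq.le _).trans_eq ?_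
        simp only [Set.indicator, Set.mem_ofPred_eq, sub_sub, Pi.one_apply]
    _ = ∑' n, ∑' j : ℤ, .ofReal (Real.exp (q - q * |(j : ℝ)|)) *
          convPow μ n {g | c g v - (t + j) ∈ Set.Icc (0 : ℝ) 1} := by
        refine tsum_congr fun n => ?_
        rw [lintegral_tsum fun j => ((measurable_one.indicator (hmeas j)).const_mul _).aemeasurable]
        refine tsum_congr fun j => ?_
        rw [lintegral_const_mul _ (measurable_one.indicator (hmeas j)),
          lintegral_indicator_one (hmeas j)]
    _ ≤ (∑' j : ℤ, .ofReal (Real.exp (q - q * |(j : ℝ)|))) * K := by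
        rw [ENNReal.tsum_comm, ← ENNReal.tsum_mul_right]
        refine ENNReal.tsum_le_tsum fun j => ?_
        rw [ENNReal.tsum_mul_left]
        gcongr
        exact hK v _

variable [MeasurableMul₂ M] [IsProbabilityMeasure μ] [MulAction M V]

theorem measurable_convPow_mul_right_preimage (n : ℕ) {E : Set M} (hE : MeasurableSet E) :
    Measurable fun h => convPow μ n {g | g * h ∈ E} :=
  measurable_measure_prodMk_right (measurable_mul hE)

/- Maximum principle: unless `t ∈ [-1, 0]`, the walk is not in the window at time `0`, and the
first step does not increase the supremum of the expected number of visits. -/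
theorem sum_convPow_cocycle_mem_Icc_le (hc : ∀ v, Measurable fun g => c g v)
    (hone : ∀ v, c 1 v = 0) (hmul : ∀ g h v, c (g * h) v = c g (h • v) + c h v) {K : ℝ≥0∞}
    (hK : ∀ v, ∑' n, convPow μ n {g | c g v ≤ 1} ≤ K) (N : ℕ) (v : V) (t : ℝ) :
    ∑ n ∈ Finset.range N, convPow μ n {g | c g v - t ∈ Set.Icc 0 1} ≤ K := by
  have hmeas : ∀ v t, MeasurableSet {g | c g v - t ∈ Set.Icc 0 1} := fun v t =>
    ((hc v).sub_const t) measurableSet_Icc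
  induction N generalizing v t with
  | zero => simp
  | succ N ih =>
    by_cases ht : -t ∈ Set.Icc (0 : ℝ) 1
    · refine (ENNReal.sum_le_tsum _).trans ((ENNReal.tsum_le_tsum fun n => ?_).trans (hK v))
      refine measure_mono fun g (hg : c g v - t ∈ Set.Icc 0 1) => ?_
      change c g v ≤ 1
      linarith [hg.2, ht.1]
    · have hzero : convPow μ 0 {g | c g v - t ∈ Set.Icc 0 1} = 0 := by
        rw [convPow, Measure.dirac_apply' _ (hmeas v t), Set.indicator_of_notMem]
        rwa [Set.mem_ofPred_eq, hone, zero_sub]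
      have hstep : ∀ n, convPow μ (n + 1) {g | c g v - t ∈ Set.Icc 0 1} =
          ∫⁻ h, convPow μ n {g | c g (h • v) - (t - c h v) ∈ Set.Icc 0 1} ∂μ := fun n => by
        rw [convPow_add_apply μ n 1 (hmeas v t), convPow_one]
        refine lintegral_congr fun h => ?_
        simp only [Set.mem_ofPred_eq, hmul, sub_sub_eq_add_sub]
      rw [Finset.sum_range_succ', hzero, add_zero]
      simp only [hstep]
      rw [← lintegral_finsetSum]
      · exact (lintegral_mono fun h => ih (h • v) (t - c h v)).trans_eq (by simp)
      · intro n _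
        simpa only [Set.mem_ofPred_eq, hmul, sub_sub_eq_add_sub] using
          measurable_convPow_mul_right_preimage (μ := μ) n (hmeas v t)

theorem tsum_convPow_cocycle_mem_Icc_le (hc : ∀ v, Measurable fun g => c g v)
    (hone : ∀ v, c 1 v = 0) (hmul : ∀ g h v, c (g * h) v = c g (h • v) + c h v) {K : ℝ≥0∞}
    (hK : ∀ v, ∑' n, convPow μ n {g | c g v ≤ 1} ≤ K) (v : V) (t : ℝ) :
    ∑' n, convPow μ n {g | c g v - t ∈ Set.Icc 0 1} ≤ K :=
  ENNReal.tsum_le_of_sum_range_le fun N => sum_convPow_cocycle_mem_Icc_le hc hone hmul hK N v t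

end Renewal

namespace HasDeviationBounds

variable {μ : Measure SL2} {lam ε A C : ℝ}
  (hμ : HasDeviationBounds μ lam ε A C)
include hμ

/- By `stretch_inv_le`, if `g • v` is that close to `w` then either `g` contracts `v`, or `g` is
exceptionally large, or `g⁻¹` does not expand `w`. -/
theorem convPow_abs_det2_le (m : ℕ) (v w : UnitCircle) :
    convPow μ m {g | |det2 (g • v : UnitCircle) w| ≤ Real.exp (-(A * m))} ≤
      .ofReal ((2 * C + 1) * Real.exp (-(lam * m))) := by
  have hsub : {g : SL2 | |det2 (g • v : UnitCircle) w| ≤ Real.exp (-(A * m))} ⊆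
      {g | logStretch g v ≤ 1} ∪ {g | logStretch g⁻¹ w ≤ 1} ∪ {g | A * m ≤ kappa g} := by
    intro g (hg : |det2 _ _| ≤ _)
    by_contra! h
    simp only [Set.mem_union, Set.mem_ofPred_eq, not_or, not_le] at h
    obtain ⟨⟨hv, hw⟩, hκ⟩ := h
    have hfirst : (stretch g v)⁻¹ ≤ 1 := by
      rw [← exp_logStretch, ← Real.exp_neg, Real.exp_le_one_iff]
      linarith
    have hsecond : opNorm g * |det2 (g • v : UnitCircle) w| ≤ 1 :=
      calc opNorm g * |det2 (g • v : UnitCircle) w|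
          ≤ Real.exp (A * m) * Real.exp (-(A * m)) := by rw [← exp_kappa]; gcongr
        _ = 1 := by rw [← Real.exp_add, add_neg_cancel, Real.exp_zero]
    have hlarge : Real.exp 1 < stretch g⁻¹ w := by
      rw [← exp_logStretch]; exact Real.exp_lt_exp.2 hw
    linarith [stretch_inv_le g v w, Real.add_one_lt_exp (one_ne_zero (α := ℝ))]
  have hnorm := hμ.le_kappa m (A * m)
  rw [sub_self, mul_zero, zero_sub] at hnorm
  refine (measure_mono hsub).trans ((measure_union_le _ _).trans
    ((add_le_add ((measure_union_le _ _).trans (add_le_add (hμ.logStretch_le_one m v)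
      (hμ.logStretch_inv_le_one m w))) hnorm).trans_eq ?_))
  have := hμ.const_pos
  rw [← ENNReal.ofReal_add (by positivity) (by positivity),
    ← ENNReal.ofReal_add (by positivity) (by positivity)]
  congr 1
  ring

theorem convPow_logStretch_sub_mem_Icc_le (m : ℕ) (v : UnitCircle) (r : ℝ) :
    convPow μ m {g | logStretch g v - r ∈ Set.Icc 0 1} ≤
      .ofReal (Real.exp (ε * (A * m - (|r| - 1)) - lam * m)) := by
  refine (measure_mono fun g (hg : logStretch g v - r ∈ Set.Icc 0 1) => ?_).trans
    (hμ.le_kappa m (|r| - 1))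
  have hr : |r| ≤ |logStretch g v| + 1 := by
    have := abs_sub_abs_le_abs_sub r (logStretch g v)
    rw [abs_sub_comm, abs_of_nonneg hg.1] at this
    linarith [hg.2]
  change |r| - 1 ≤ kappa g
  linarith [abs_logStretch_le_kappa g v]

/- A convex combination of the exponents in the two preceding bounds. -/
theorem exists_convPow_abs_det2_le_inter_le : ∃ q > 0, ∃ D > 0, ∀ (m : ℕ) v w r,
    convPow μ m {g | |det2 (g • v : UnitCircle) (w : UnitCircle)| ≤ Real.exp (-(A * m)) ∧
        logStretch g v - r ∈ Set.Icc 0 1} ≤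
      .ofReal (D * Real.exp (-(lam / 2 * m)) * Real.exp (-(q * |r|))) := by
  have := hμ.lam_pos; have := hμ.eps_pos; have := hμ.rate_pos; have := hμ.const_pos
  set θ := lam / (lam + 2 * (ε * A)) with hθ
  have hθ_pos : 0 < θ := by positivity
  have hθA : θ * (ε * A) ≤ lam / 2 := by
    rw [hθ, div_mul_eq_mul_div, div_le_div_iff₀ (by positivity) two_pos]
    nlinarith
  have hθ_le : θ ≤ 1 := (div_le_one (by positivity)).2 (le_add_of_nonneg_right (by positivity))
  refine ⟨θ * ε, by positivity,
    Real.exp ((1 - θ) * Real.log (2 * C + 1) + θ * ε), Real.exp_pos _, fun m v w r => ?_⟩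
  have hnear := hμ.convPow_abs_det2_le m v w
  rw [← Real.exp_log (by positivity : 0 < 2 * C + 1), ← Real.exp_add] at hnear
  refine (le_min ((measure_mono fun g hg => hg.1).trans hnear) ((measure_mono fun g hg =>
    hg.2).trans (hμ.convPow_logStretch_sub_mem_Icc_le m v r))).trans ?_
  rw [← ENNReal.ofReal_min, ← Real.exp_monotone.map_min, ← Real.exp_add, ← Real.exp_add]
  refine ENNReal.ofReal_le_ofReal (Real.exp_le_exp.2
    ((Convex.min_le_combo _ _ (sub_nonneg.2 hθ_le) hθ_pos.le (sub_add_cancel 1 θ)).trans ?_))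
  simp only [smul_eq_mul]
  linarith [mul_le_mul_of_nonneg_right hθA m.cast_nonneg]

theorem sum_convPow_le_kappa_le {s : ℝ} {m : ℕ} (hm : 2 * (A * m) ≤ s) :
    ∑ n ∈ Finset.range m, convPow μ n {g | s ≤ kappa g} ≤
      (∑' n : ℕ, .ofReal (Real.exp (-(lam * n)))) * .ofReal (Real.exp (-(ε / 2 * s))) := by
  have := hμ.eps_pos
  have := hμ.rate_pos
  calc ∑ n ∈ Finset.range m, convPow μ n {g | s ≤ kappa g}
      ≤ ∑ n ∈ Finset.range m, .ofReal (Real.exp (-(lam * n)) * Real.exp (-(ε / 2 * s))) := by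
        refine Finset.sum_le_sum fun n hn => (hμ.le_kappa n s).trans ?_
        rw [← Real.exp_add]
        have hn : (n : ℝ) ≤ m := mod_cast (Finset.mem_range.1 hn).le
        have : A * n ≤ A * m := by gcongr
        gcongr
        nlinarith
    _ ≤ ∑' n : ℕ, .ofReal (Real.exp (-(lam * n)) * Real.exp (-(ε / 2 * s))) :=
        ENNReal.sum_le_tsum _
    _ = _ := by simp_rw [ENNReal.ofReal_mul (Real.exp_pos _).le, ENNReal.tsum_mul_right]

variable [IsProbabilityMeasure μ]

theorem exists_tsum_lintegral_exp_neg_abs_logStretch_le {q : ℝ} (hq : 0 < q) :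
    ∃ L ≠ ∞, ∀ (v : UnitCircle) t,
      ∑' n, ∫⁻ g, .ofReal (Real.exp (-(q * |t - logStretch g v|))) ∂convPow μ n ≤ L := by
  have hmeas : ∀ v : UnitCircle, Measurable fun g => logStretch g v := fun v =>
    (by fun_prop : Continuous _).measurable
  have hsum : Summable fun n : ℕ => C * Real.exp (-(lam * n)) := by
    simpa only [neg_mul, mul_neg, mul_comm lam] using
      (Real.summable_exp_nat_mul_iff.2 (neg_neg_of_pos hμ.lam_pos)).mul_left C
  exact exists_tsum_lintegral_exp_neg_abs_le hmeas
    (fun v t => tsum_convPow_cocycle_mem_Icc_le hmeas logStretch_one logStretch_mul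
      (fun v => ENNReal.tsum_le_tsum fun n => hμ.logStretch_le_one n v) v t)
    hsum.tsum_ofReal_ne_top hq

/- Condition on the first `k` steps: the last `m` steps alone then bring the walk close to `w`. -/
theorem exists_tsum_convPow_add_abs_det2_le_inter_le : ∃ B ≠ ∞, ∀ (m : ℕ) (v w : UnitCircle) t,
    ∑' k, convPow μ (k + m) {g | |det2 (g • v : UnitCircle) w| ≤ Real.exp (-(A * m)) ∧
        logStretch g v - t ∈ Set.Icc 0 1} ≤
      B * .ofReal (Real.exp (-(lam / 2 * m))) := by
  obtain ⟨q, hq, D, hD, hlast⟩ := hμ.exists_convPow_abs_det2_le_inter_le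
  obtain ⟨L, hL, hfirst⟩ := hμ.exists_tsum_lintegral_exp_neg_abs_logStretch_le hq
  refine ⟨_, ENNReal.mul_ne_top (ENNReal.ofReal_ne_top (r := D)) hL, fun m v w t => ?_⟩
  have hdet : Continuous fun g : SL2 => |det2 (g • v : UnitCircle) w| :=
    (continuous_det2 (continuous_subtype_val.comp (continuous_id.smul continuous_const))
      continuous_const).abs
  have hmeas : MeasurableSet {g : SL2 | |det2 (g • v : UnitCircle) w| ≤ Real.exp (-(A * m)) ∧
      logStretch g v - t ∈ Set.Icc 0 1} :=
    (measurableSet_le hdet.measurable measurable_const).inter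
      ((by fun_prop : Continuous fun g : SL2 => logStretch g v - t).measurable measurableSet_Icc)
  calc ∑' k, convPow μ (k + m) _
      ≤ ∑' k, ∫⁻ h, .ofReal (D * Real.exp (-(lam / 2 * m))) *
          .ofReal (Real.exp (-(q * |t - logStretch h v|))) ∂convPow μ k := by
        refine ENNReal.tsum_le_tsum fun k => ?_
        rw [add_comm, convPow_add_apply μ m k hmeas]
        refine lintegral_mono fun h => ?_
        simp only [Set.mem_ofPred_eq, mul_smul, logStretch_mul,
          ← ENNReal.ofReal_mul (mul_pos hD (Real.exp_pos _)).le]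
        refine le_trans (le_of_eq ?_) (hlast m (h • v) w (t - logStretch h v))
        simp only [sub_sub_eq_add_sub]
    _ ≤ .ofReal (D * Real.exp (-(lam / 2 * m))) * L := by
        simp_rw [lintegral_const_mul' _ _ ENNReal.ofReal_ne_top, ENNReal.tsum_mul_left]
        gcongr
        exact hfirst v t
    _ = _ := by rw [ENNReal.ofReal_mul hD.le]; ring

/- Before time `m`, reaching norm `e^s` is a large deviation; after time `m`, the last `m` steps
account for the proximity to `w`. -/
theorem exists_tsum_convPow_abs_det2_le_mem_Icc_one_le_min : ∃ K ≠ ∞,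
    ∀ (m : ℕ) (s t : ℝ) (v w : UnitCircle), 0 ≤ s → s ≤ t → 2 * (A * m) ≤ s →
      ∑' n, convPow μ n {g | |det2 (g • v : UnitCircle) w| ≤ Real.exp (-s) ∧
        logStretch g v - t ∈ Set.Icc 0 1} ≤
        K * .ofReal (Real.exp (-min (ε / 2 * s) (lam / 2 * m))) := by
  obtain ⟨B, hB, hlate⟩ := hμ.exists_tsum_convPow_add_abs_det2_le_inter_le
  have hsummable : Summable fun n : ℕ => Real.exp (-(lam * n)) := by
    simpa only [mul_neg, mul_comm lam] using
      Real.summable_exp_nat_mul_iff.2 (neg_neg_of_pos hμ.lam_pos)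
  refine ⟨(∑' n : ℕ, .ofReal (Real.exp (-(lam * n)))) + B,
    ENNReal.add_ne_top.2 ⟨hsummable.tsum_ofReal_ne_top, hB⟩, fun m s t v w hs hst hm => ?_⟩
  set E := {g : SL2 | |det2 (g • v : UnitCircle) w| ≤ Real.exp (-s) ∧
    logStretch g v - t ∈ Set.Icc 0 1}
  have hearly : ∀ n, convPow μ n E ≤ convPow μ n {g | s ≤ kappa g} := fun n => by
    refine measure_mono fun g hg => ?_
    have := (le_abs_self _).trans (abs_logStretch_le_kappa g v)
    change s ≤ kappa g
    linarith [hg.2.1]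
  have hclose : ∀ n, convPow μ n E ≤
      convPow μ n {g | |det2 (g • v : UnitCircle) w| ≤ Real.exp (-(A * m)) ∧
        logStretch g v - t ∈ Set.Icc 0 1} := fun n =>
    measure_mono fun g hg => ⟨hg.1.trans (Real.exp_le_exp.2 (by linarith)), hg.2⟩
  calc ∑' n, convPow μ n E
      = ∑ n ∈ Finset.range m, convPow μ n E + ∑' k, convPow μ (k + m) E :=
        ENNReal.summable.sum_add_tsum_nat_add'.symm
    _ ≤ (∑' n : ℕ, .ofReal (Real.exp (-(lam * n)))) * .ofReal (Real.exp (-(ε / 2 * s))) +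
          B * .ofReal (Real.exp (-(lam / 2 * m))) :=
        add_le_add
          ((Finset.sum_le_sum fun n _ => hearly n).trans (hμ.sum_convPow_le_kappa_le hm))
          ((ENNReal.tsum_le_tsum fun k => hclose (k + m)).trans (hlate m v w t))
    _ ≤ _ := by
        rw [add_mul]
        gcongr
        exacts [min_le_left _ _, min_le_right _ _]

theorem exists_tsum_convPow_abs_det2_le_mem_Icc_one_le : ∃ K ≠ ∞, ∃ θ > 0,
    ∀ (s t : ℝ) (v w : UnitCircle), 0 ≤ s → s ≤ t →
      ∑' n, convPow μ n {g | |det2 (g • v : UnitCircle) w| ≤ Real.exp (-s) ∧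
        logStretch g v - t ∈ Set.Icc 0 1} ≤ K * .ofReal (Real.exp (-(θ * s))) := by
  obtain ⟨K, hK, hbound⟩ := hμ.exists_tsum_convPow_abs_det2_le_mem_Icc_one_le_min
  have hlam := hμ.lam_pos
  have hε := hμ.eps_pos
  have hA := hμ.rate_pos
  refine ⟨K * .ofReal (Real.exp (lam / 2)), ENNReal.mul_ne_top hK ENNReal.ofReal_ne_top,
    min (ε / 2) (lam / (4 * A)), by positivity, fun s t v w hs hst => ?_⟩
  set m := ⌊s / (2 * A)⌋₊
  have hm_le : 2 * (A * m) ≤ s := by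
    have := Nat.floor_le (a := s / (2 * A)) (by positivity)
    rw [le_div_iff₀ (by positivity)] at this
    linarith
  have hm_lt : lam / (4 * A) * s ≤ lam / 2 + lam / 2 * m :=
    calc lam / (4 * A) * s = lam / 2 * (s / (2 * A)) := by ring
      _ ≤ lam / 2 * (m + 1) := by gcongr; exact (Nat.lt_floor_add_one _).le
      _ = _ := by ring
  refine (hbound m s t v w hs hst hm_le).trans ?_
  rw [mul_assoc, ← ENNReal.ofReal_mul (Real.exp_pos _).le, ← Real.exp_add]
  gcongr
  rw [neg_le_iff_add_nonneg', min_mul_of_nonneg _ _ hs]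
  rcases min_choice (ε / 2 * s) (lam / 2 * m) with h | h <;> rw [h]
  · linarith [min_le_left (ε / 2 * s) (lam / (4 * A) * s)]
  · linarith [min_le_right (ε / 2 * s) (lam / (4 * A) * s)]

theorem exists_tsum_convPow_abs_det2_le_mem_Icc_le : ∃ K ≠ ∞, ∃ θ > 0,
    ∀ (s a t : ℝ) (v w : UnitCircle), 0 ≤ s → 0 ≤ a → s ≤ t →
      ∑' n, convPow μ n {g | |det2 (g • v : UnitCircle) w| ≤ Real.exp (-s) ∧
        logStretch g v - t ∈ Set.Icc 0 a} ≤ K * .ofReal ((1 + a) * Real.exp (-(θ * s))) := by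
  obtain ⟨K, hK, θ, hθ, hunit⟩ := hμ.exists_tsum_convPow_abs_det2_le_mem_Icc_one_le
  refine ⟨K, hK, θ, hθ, fun s a t v w hs ha hst => ?_⟩
  have hcover : {g : SL2 | |det2 (g • v : UnitCircle) w| ≤ Real.exp (-s) ∧
      logStretch g v - t ∈ Set.Icc 0 a} ⊆ ⋃ j ∈ Finset.range (⌊a⌋₊ + 1),
        {g : SL2 | |det2 (g • v : UnitCircle) w| ≤ Real.exp (-s) ∧
          logStretch g v - (t + j) ∈ Set.Icc 0 1} := fun g ⟨hdet, hpos, hle⟩ => by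
    refine Set.mem_biUnion (x := ⌊logStretch g v - t⌋₊) ?_ ⟨hdet, ?_, ?_⟩
    · exact Finset.mem_coe.2 (Finset.mem_range_succ_iff.2 (Nat.floor_mono hle))
    · linarith [Nat.floor_le hpos]
    · linarith [Nat.lt_floor_add_one (logStretch g v - t)]
  calc ∑' n, convPow μ n {g | |det2 (g • v : UnitCircle) w| ≤ Real.exp (-s) ∧
        logStretch g v - t ∈ Set.Icc 0 a}
      ≤ ∑' n, ∑ j ∈ Finset.range (⌊a⌋₊ + 1), convPow μ n {g |
          |det2 (g • v : UnitCircle) w| ≤ Real.exp (-s) ∧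
            logStretch g v - (t + j) ∈ Set.Icc 0 1} :=
        ENNReal.tsum_le_tsum fun n => (measure_mono hcover).trans (measure_biUnion_finset_le _ _)
    _ = ∑ j ∈ Finset.range (⌊a⌋₊ + 1), ∑' n, convPow μ n {g |
          |det2 (g • v : UnitCircle) w| ≤ Real.exp (-s) ∧
            logStretch g v - (t + j) ∈ Set.Icc 0 1} :=
        Summable.tsum_finsetSum fun _ _ => ENNReal.summable
    _ ≤ ∑ _j ∈ Finset.range (⌊a⌋₊ + 1), K * .ofReal (Real.exp (-(θ * s))) :=
        Finset.sum_le_sum fun j _ =>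
          hunit s (t + j) v w hs (by linarith [(Nat.cast_nonneg j : (0 : ℝ) ≤ j)])
    _ = K * .ofReal ((1 + ⌊a⌋₊) * Real.exp (-(θ * s))) := by
        rw [Finset.sum_const, Finset.card_range, nsmul_eq_mul, mul_left_comm,
          ENNReal.ofReal_mul (by positivity), add_comm (1 : ℝ)]
        norm_cast
    _ ≤ _ := by
        gcongr
        exact Nat.floor_le ha

end HasDeviationBounds

/-! ### Words and the projective line -/

theorem measurable_word (n : ℕ) : Measurable (word : (Fin n → SL2) → SL2) := by
  unfold word
  induction n with
  | zero => simp
  | succ n ih =>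
    simp only [List.ofFn_succ, List.prod_cons]
    exact (measurable_pi_apply 0).mul
      (ih.comp (measurable_pi_lambda _ fun i => measurable_pi_apply _))

theorem word_eq_mul_last {n : ℕ} (g : Fin (n + 1) → SL2) :
    word g = word (fun i : Fin n => g i.castSucc) * g (Fin.last n) := by
  unfold word
  rw [List.ofFn_succ', List.concat_eq_append, List.prod_append, List.prod_singleton]

theorem map_word_μpi (μ : Measure SL2) [IsProbabilityMeasure μ] (n : ℕ) :
    (μpi μ n).map word = convPow μ n := by
  unfold μpi
  induction n with
  | zero =>
    have : (word : (Fin 0 → SL2) → SL2) = fun _ => 1 := by ext1; simp [word]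
    rw [this, Measure.map_const, measure_univ, one_smul, convPow]
  | succ n ih =>
    set e := MeasurableEquiv.piFinSuccAbove (fun _ => SL2) (Fin.last n)
    have he : MeasurePreserving e _ _ :=
      measurePreserving_piFinSuccAbove (fun _ : Fin (n + 1) => μ) (Fin.last n)
    have hword : (word : (Fin (n + 1) → SL2) → SL2) =
        (fun p : SL2 × SL2 => p.1 * p.2) ∘ Prod.map word id ∘ Prod.swap ∘ e := by
      ext1 g
      rw [word_eq_mul_last]
      simp only [e, Function.comp_apply, MeasurableEquiv.piFinSuccAbove_apply]
      rw [Fin.insertNthEquiv_symm_apply, Prod.swap_prod_mk, Prod.map_apply]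
      rw [Fin.removeNth_last]
      rfl
    have hprod : Measurable (Prod.map word id : (Fin n → SL2) × SL2 → SL2 × SL2) :=
      (measurable_word n).prodMap measurable_id
    rw [hword, ← Measure.map_map measurable_mul (hprod.comp (measurable_swap.comp e.measurable)),
      ← Measure.map_map hprod (measurable_swap.comp e.measurable),
      ← Measure.map_map measurable_swap e.measurable, he.map_eq, Measure.prod_swap,
      ← Measure.map_prod_map _ _ (measurable_word n) measurable_id, ih, Measure.map_id]
    rfl

theorem enorm2_eq_norm (v : Fin 2 → ℝ) : enorm2 v = ‖(WithLp.toLp 2 v : Plane)‖ := by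
  simp [enorm2, EuclideanSpace.norm_eq]

theorem lin_toLp (g : SL2) (v : Fin 2 → ℝ) :
    lin g (WithLp.toLp 2 v) = WithLp.toLp 2 ((g : Matrix (Fin 2) (Fin 2) ℝ).mulVec v) :=
  Matrix.toEuclideanCLM_toLp _ _

theorem enorm2_rep_pos (x : PX) : 0 < enorm2 x.rep := by
  simpa [enorm2_eq_norm] using x.rep_nonzero

/-- A unit vector spanning the line `x`. -/
def unitRep (x : PX) : UnitCircle :=
  ⟨(enorm2 x.rep)⁻¹ • WithLp.toLp 2 x.rep, by
    rw [mem_sphere_zero_iff_norm, norm_smul, norm_inv, enorm2_eq_norm, norm_norm]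
    exact inv_mul_cancel₀ (enorm2_eq_norm x.rep ▸ (enorm2_rep_pos x).ne')⟩

theorem toLp_rep (x : PX) : (WithLp.toLp 2 x.rep : Plane) = enorm2 x.rep • (unitRep x : Plane) :=
  (smul_inv_smul₀ (enorm2_rep_pos x).ne' _).symm

theorem toLp_mulVec_rep (g : SL2) (x : PX) :
    (WithLp.toLp 2 ((g : Matrix (Fin 2) (Fin 2) ℝ).mulVec x.rep) : Plane) =
      (enorm2 x.rep * stretch g (unitRep x)) • ((g • unitRep x : UnitCircle) : Plane) := by
  rw [← lin_toLp, toLp_rep, map_smul, lin_coe, smul_smul]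

theorem cocycle_eq_logStretch (g : SL2) (x : PX) : cocycle g x = logStretch g (unitRep x) := by
  have hx := enorm2_rep_pos x
  have hg := stretch_pos g (unitRep x)
  rw [cocycle, enorm2_eq_norm (Matrix.mulVec _ _), toLp_mulVec_rep, norm_smul,
    norm_eq_of_mem_sphere, mul_one, Real.norm_of_nonneg (mul_pos hx hg).le,
    mul_div_cancel_left₀ _ hx.ne', logStretch]

theorem projDist_eq_abs_det2 {x y : PX} {u v : UnitCircle} {k l : ℝ}
    (hx : WithLp.toLp 2 x.rep = k • (u : Plane)) (hy : WithLp.toLp 2 y.rep = l • (v : Plane)) :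
    projDist x y = |det2 u v| := by
  have hk : k ≠ 0 := by
    rintro rfl
    simp [x.rep_nonzero] at hx
  have hl : l ≠ 0 := by
    rintro rfl
    simp [y.rep_nonzero] at hy
  have hdet : x.rep 0 * y.rep 1 - x.rep 1 * y.rep 0 = k * (l * det2 u v) := by
    rw [← det2_smul_right, ← det2_smul_left, ← hx, ← hy]; rfl
  rw [projDist, hdet, enorm2_eq_norm, enorm2_eq_norm, hx, hy, norm_smul, norm_smul,
    norm_eq_of_mem_sphere, norm_eq_of_mem_sphere, abs_mul, abs_mul, Real.norm_eq_abs,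
    Real.norm_eq_abs]
  field_simp

theorem projDist_act (g : SL2) (x y : PX) :
    projDist (act g x) y = |det2 (g • unitRep x : UnitCircle) (unitRep y)| := by
  have hne : (g : Matrix (Fin 2) (Fin 2) ℝ).mulVec x.rep ≠ 0 :=
    (Matrix.SpecialLinearGroup.toLin' g).map_ne_zero_iff.2 x.rep_nonzero
  have hact : act g x = Projectivization.mk ℝ _ hne := by
    conv_lhs => rw [act, ← x.mk_rep, Projectivization.map_mk]
    rfl
  obtain ⟨c, hc⟩ := Projectivization.exists_smul_eq_mk_rep ℝ _ hne
  refine projDist_eq_abs_det2 (k := c * (enorm2 x.rep * stretch g (unitRep x))) ?_ (toLp_rep y)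
  rw [hact, ← hc, Units.smul_def, WithLp.toLp_smul, toLp_mulVec_rep, smul_smul]

theorem renewal_independence_cocycle_general
    (μ : Measure SL2) [IsProbabilityMeasure μ]
    (hmom : HasExpMoment μ) (hzd : ZariskiDense μ) :
    ∃ C > (0 : ℝ), ∃ ε' > (0 : ℝ), ∀ (s a t : ℝ) (x x' : PX),
      0 ≤ s → 0 ≤ a → s ≤ t →
      (∑' n : ℕ, μpi μ n {g | projDist (act (word g) x) x' ≤ Real.exp (-s) ∧
          cocycle (word g) x - t ∈ Set.Icc 0 a}) ≤
        ENNReal.ofReal (C * (1 + a) * Real.exp (-(ε' * s))) := by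
  obtain ⟨lam, ε, A, C, hμ⟩ := exists_hasDeviationBounds hmom hzd
  obtain ⟨K, hK, θ, hθ, hbound⟩ := hμ.exists_tsum_convPow_abs_det2_le_mem_Icc_le
  refine ⟨K.toReal + 1, by positivity, θ, hθ, fun s a t x x' hs ha hst => ?_⟩
  have hle : K ≤ .ofReal (K.toReal + 1) :=
    (ENNReal.le_ofReal_iff_toReal_le hK (by positivity)).2 (by linarith)
  rw [mul_assoc, ENNReal.ofReal_mul (by positivity)]
  refine le_trans (ENNReal.tsum_le_tsum fun n => ?_)
    ((hbound s a t (unitRep x) (unitRep x') hs ha hst).trans (mul_le_mul_left hle _))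
  simp_rw [projDist_act, cocycle_eq_logStretch, ← map_word_μpi]
  exact Measure.le_map_apply (measurable_word n).aemeasurable _

theorem renewal_independence_cocycle
    (μ : Measure SL2) [IsProbabilityMeasure μ]
    (hmom : HasExpMoment μ) (hzd : ZariskiDense μ) :
    ∃ C > (0 : ℝ), ∃ ε' > (0 : ℝ), ∀ (s a t : ℝ) (x x' : PX),
      0 < s → 0 < a → 5 * s < t →
      (∑' n : ℕ, μpi μ n {g | projDist (act (word g) x) x' ≤ Real.exp (-s) ∧
          cocycle (word g) x - t ∈ Set.Icc 0 a}) ≤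
        ENNReal.ofReal (C * (1 + a) ^ 2 * Real.exp (-(ε' * s))) := by
  obtain ⟨C, hC, ε', hε', h⟩ := renewal_independence_cocycle_general μ hmom hzd
  refine ⟨C, hC, ε', hε', fun s a t x x' hs ha hst => ?_⟩
  refine (h s a t x x' hs.le ha.le (by linarith)).trans ?_
  gcongr
  exact le_self_pow₀ (by linarith) two_ne_zero

end
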